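/- arXiv:0802.2554 — 2 statements merged into one kernel-verified Lean document; each statement's English description precedes it below -/
import Mathlib

section
/- For every finite set X and every d ≥ -1, the group P_d(X) contains no free non-abelian subgroup. -/
/-! The rooted tree `X^*` of finite words over a fixed alphabet `X`, realized via its
boundary `X^ω = ℕ → X`; automorphisms, restrictions, self-similar and contracting groups. -/

/-- A permutation of the boundary `X^ω = ℕ → X` is (induced by) an automorphism of the
rooted tree `X^*` iff for all `n` it preserves the relation "agree on the first `n`
letters" (two sequences have the same length-`n` beginning iff their images do). -/
def IsTreeAut {X : Type*} (f : Equiv.Perm (ℕ → X)) : Prop :=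
  ∀ (n : ℕ) (w w' : ℕ → X),
    (∀ i, i < n → w i = w' i) ↔ (∀ i, i < n → f w i = f w' i)

/-- The automorphism group `Aut X^*` of the rooted tree `X^*`, realized as the group of
those permutations of the boundary `X^ω` induced by tree automorphisms. -/
def treeAut (X : Type*) : Subgroup (Equiv.Perm (ℕ → X)) where
  carrier := {f | IsTreeAut f}
  one_mem' := by intro n w w'; simp
  mul_mem' := by
    intro f g hf hg n w w'
    have h := (hg n w w').trans (hf n (g w) (g w'))
    simpa using h
  inv_mem' := by
    intro f hf n w w'
    have h := (hf n (f⁻¹ w) (f⁻¹ w')).symm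
    simpa using h

/-- The concatenation `v·u ∈ X^ω` of a finite word `v ∈ X^m` and a sequence `u ∈ X^ω`. -/
def wappend {X : Type*} {m : ℕ} (v : Fin m → X) (u : ℕ → X) : ℕ → X :=
  fun i => if h : i < m then v ⟨i, h⟩ else u (i - m)

/-- The underlying function of the restriction `f|_v`: it sends `u` to the sequence with
`v·u ↦ (f v)·(f|_v u)`, i.e. `(f|_v u) j` is letter `m + j` of `f (v·u)`. -/
def restrictFun {X : Type*} (f : Equiv.Perm (ℕ → X)) {m : ℕ} (v : Fin m → X) :
    (ℕ → X) → (ℕ → X) :=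
  fun u j => f (wappend v u) (m + j)

open scoped Classical in
/-- The restriction (section, state) `f|_v` of `f` at the vertex `v ∈ X^*`: the unique
automorphism of `X^*` with `f (v·u) = (f v)·(f|_v u)` for all `u`.  (For `f` a tree
automorphism the underlying function `restrictFun f v` is bijective, and `f|_v` is the
corresponding permutation of the boundary.) -/
noncomputable def restrictPerm {X : Type*} (f : Equiv.Perm (ℕ → X)) {m : ℕ}
    (v : Fin m → X) : Equiv.Perm (ℕ → X) :=
  if h : Function.Bijective (restrictFun f v) then Equiv.ofBijective _ h else 1

/-- A group `G` of permutations of the boundary is self-similar if it is closed under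
taking restrictions. -/
def SelfSimilar {X : Type*} (G : Subgroup (Equiv.Perm (ℕ → X))) : Prop :=
  ∀ g ∈ G, ∀ (m : ℕ) (v : Fin m → X), restrictPerm g v ∈ G

/-- The (self-similar) group `G` is contracting with the finite set `N ⊆ G`: for every
`g ∈ G` there is `n` such that `g|_v ∈ N` for all words `v` of length greater than `n`. -/
def IsContractingWith {X : Type*} (G : Subgroup (Equiv.Perm (ℕ → X)))
    (N : Finset (Equiv.Perm (ℕ → X))) : Prop :=
  (N : Set (Equiv.Perm (ℕ → X))) ⊆ (G : Set (Equiv.Perm (ℕ → X))) ∧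
    ∀ g ∈ G, ∃ n : ℕ, ∀ (m : ℕ) (v : Fin m → X), n < m → restrictPerm g v ∈ N

/-- The restriction `f|_v` is trivial: `f` maps `v·u` to `(f v)·u` for every `u`. -/
def RestrictTrivial {X : Type*} (f : Equiv.Perm (ℕ → X)) {m : ℕ} (v : Fin m → X) : Prop :=
  ∀ u : ℕ → X, (∀ i : Fin m, u i = v i) → ∀ i, m ≤ i → f u i = u i

/-- The growth function `θ_f(n) = |{v ∈ X^n : f|_v ≠ id}|` of `f`. -/
noncomputable def thetaGrowth {X : Type*} (f : Equiv.Perm (ℕ → X)) (n : ℕ) : ℕ :=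
  {v : Fin n → X | ¬ RestrictTrivial f v}.ncard

/-- `f` is finite-state: it has only finitely many restrictions `f|_v`, `v ∈ X^*`. -/
def FiniteState {X : Type*} (f : Equiv.Perm (ℕ → X)) : Prop :=
  {h : Equiv.Perm (ℕ → X) | ∃ (m : ℕ) (v : Fin m → X), restrictPerm f v = h}.Finite

/-- `f` is finitary: for some `n`, `f|_v = id` for all words `v` of length `n`. -/
def IsFinitary {X : Type*} (f : Equiv.Perm (ℕ → X)) : Prop :=
  ∃ n : ℕ, ∀ u : ℕ → X, ∀ i, n ≤ i → f u i = u i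

/-- Membership in Sidki's group `P_d(X)`, for `d ≥ -1`: for `d = -1`, the finitary
automorphisms of `X^*`; for `d ≥ 0`, the finite-state automorphisms of `X^*` whose growth
function `θ` is bounded above by a polynomial of degree `d`. -/
def MemP {X : Type*} (d : ℤ) (f : Equiv.Perm (ℕ → X)) : Prop :=
  IsTreeAut f ∧
    ((d = -1 ∧ IsFinitary f) ∨
      (0 ≤ d ∧ FiniteState f ∧
        ∃ p : Polynomial ℕ, (p.natDegree : ℤ) ≤ d ∧ ∀ n, thetaGrowth f n ≤ p.eval n))

/-- The set `Σ_f` of `f`-singular points of `X^ω`: points none of whose beginnings `v`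
satisfy `f|_v = id`. -/
def singularSet {X : Type*} (f : Equiv.Perm (ℕ → X)) : Set (ℕ → X) :=
  {w | ∀ m : ℕ, ¬ RestrictTrivial f (fun i : Fin m => w i)}

/-! Suppose that a nonabelian free group acts faithfully by finite-state automorphisms of polynomial
growth. By compactness there is a boundary point `w` near which no nontrivial element acts
trivially: otherwise the kernels of the actions on the cones of some level would be nontrivial, and
such subgroups of a free group have a nontrivial common element.

The orbit of `w` cannot be free. If it were, then the uniform distributions on the beginnings of
length `n` of its points would define an invariant atomless mass, for which polynomial growth makes
almost all sections of the generators trivial. But the moves with trivial section lift to the Cayley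
graph of the free group, a forest, so there are fewer of them than vertices, whereas a free group of
rank two provides almost twice as many. Hence the stabilizer of `w` is nonabelian as well.

Sections along `w` recur, by finiteness of the set of states, and yield a faithful action in which
every element `g` is its own section at a word `u`. The sections of `g` at the other words of the
same length have growth of smaller degree, so by induction none of the corresponding actions is
faithful on a subgroup of finite index. An element in all of their kernels is trivial, being
determined by these sections and itself. -/

section FreeGroup

open IsFreeGroup
open scoped commutatorElement

variable {G : Type*} [Group G]

theorem commute_of_commute_zpow [IsMulTorsionFree G] {a b : G} {m n : ℤ} (hm : m ≠ 0)
    (hn : n ≠ 0) (h : Commute (a ^ m) (b ^ n)) : Commute a b := by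
  have key {c d : G} {k : ℤ} (hk : k ≠ 0) (hcd : Commute c (d ^ k)) : Commute c d := by
    have hconj : (c * d * c⁻¹) ^ k = d ^ k := by
      rw [conj_zpow, hcd.eq, mul_inv_cancel_right]
    exact mul_inv_eq_iff_eq_mul.mp (zpow_left_injective hk hconj)
  exact (key hm (key hn h).symm).symm

theorem nontrivial_of_not_commute (hG : ∃ a b : G, ¬ Commute a b) : Nontrivial G :=
  let ⟨a, b, hab⟩ := hG
  ⟨a, b, fun h ↦ hab (h ▸ Commute.refl a)⟩

variable [IsFreeGroup G]

instance : IsMulTorsionFree G :=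
  (toFreeGroup G).injective.isMulTorsionFree (toFreeGroup G).toMonoidHom

theorem isCyclic_of_subsingleton_generators [Subsingleton (Generators G)] : IsCyclic G := by
  rcases isEmpty_or_nonempty (Generators G) with _ | ⟨⟨x⟩⟩
  · have : Subsingleton G := (toFreeGroup G).toEquiv.subsingleton
    infer_instance
  · have : Unique (Generators G) := uniqueOfSubsingleton x
    exact isCyclic_of_surjective (toFreeGroup G).symm (toFreeGroup G).symm.surjective

theorem not_commute_of_ne {x y : Generators G} (hxy : x ≠ y) : ¬ Commute (of x) (of y) := by
  classical
  intro h
  have := h.map (lift fun t ↦ if t = x then Equiv.swap (0 : Fin 3) 1 else Equiv.swap 1 2)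
  simp only [lift_of, if_pos, if_neg hxy.symm] at this
  exact absurd this.eq (by decide)

/-- Commuting elements of a free group generate a cyclic subgroup by Nielsen–Schreier. -/
theorem exists_zpow_eq_zpow {a b : G} (hab : Commute a b) (ha : a ≠ 1) (hb : b ≠ 1) :
    ∃ m n : ℤ, m ≠ 0 ∧ n ≠ 0 ∧ a ^ m = b ^ n := by
  let K : Subgroup G := Subgroup.closure {a, b}
  have hK (x y : K) : Commute x y := by
    have hcomm : ∀ c ∈ ({a, b} : Set G), ∀ d ∈ ({a, b} : Set G), c * d = d * c := by
      simp only [Set.mem_insert_iff, Set.mem_singleton_iff]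
      rintro c (rfl | rfl) d (rfl | rfl) <;> first | rfl | exact hab.eq | exact hab.eq.symm
    exact (Subgroup.isMulCommutative_closure hcomm).is_comm.comm x y
  have : Subsingleton (Generators K) :=
    ⟨fun x y ↦ by_contra fun hxy ↦ not_commute_of_ne hxy (hK _ _)⟩
  obtain ⟨⟨g, hg⟩, hgen⟩ := (isCyclic_of_subsingleton_generators (G := K)).exists_generator
  obtain ⟨i, hi⟩ := hgen ⟨a, Subgroup.subset_closure (by simp)⟩
  obtain ⟨j, hj⟩ := hgen ⟨b, Subgroup.subset_closure (by simp)⟩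
  obtain rfl : g ^ i = a := congrArg Subtype.val hi
  obtain rfl : g ^ j = b := congrArg Subtype.val hj
  refine ⟨j, i, ?_, ?_, zpow_comm g i j⟩
  · rintro rfl
    exact hb (zpow_zero g)
  · rintro rfl
    exact ha (zpow_zero g)

/-- Two nontrivial normal subgroups of a free group meet nontrivially: either two of their
elements have a nontrivial commutator, or these elements have a common power. -/
theorem exists_ne_one_forall_map_eq_one [Nontrivial G] {ι H : Type*} [Group H] (s : Finset ι)
    (f : ι → G →* H) (hf : ∀ i ∈ s, ¬ Function.Injective (f i)) :
    ∃ z : G, z ≠ 1 ∧ ∀ i ∈ s, f i z = 1 := by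
  classical
  induction s using Finset.induction_on with
  | empty => simpa using exists_ne (1 : G)
  | insert i s _ ih =>
    simp only [Finset.forall_mem_insert] at hf ⊢
    obtain ⟨z, hz, hsz⟩ := ih hf.2
    obtain ⟨w, hw, hw1⟩ : ∃ w, f i w = 1 ∧ w ≠ 1 := by
      simpa only [injective_iff_map_eq_one, not_forall, exists_prop] using hf.1
    by_cases hzw : Commute z w
    · obtain ⟨m, n, hm, -, heq⟩ := exists_zpow_eq_zpow hzw hz hw1
      refine ⟨z ^ m, mt (IsMulTorsionFree.zpow_eq_one_iff_left hm).mp hz, ?_, fun j hj ↦ ?_⟩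
      · rw [heq, map_zpow, hw, one_zpow]
      · rw [map_zpow, hsz j hj, one_zpow]
    · refine ⟨⁅z, w⁆, mt commutatorElement_eq_one_iff_commute.mp hzw, ?_, fun j hj ↦ ?_⟩
      · rw [map_commutatorElement, hw, commutatorElement_one_right]
      · rw [map_commutatorElement, hsz j hj, commutatorElement_one_left]

theorem exists_not_commute_of_finiteIndex (hG : ∃ a b : G, ¬ Commute a b) (N : Subgroup G)
    [N.FiniteIndex] : ∃ a b : N, ¬ Commute a b := by
  obtain ⟨a, b, hab⟩ := hG
  obtain ⟨m, hm, -, ham⟩ := N.exists_pow_mem_of_index_ne_zero Subgroup.FiniteIndex.index_ne_zero a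
  obtain ⟨n, hn, -, hbn⟩ := N.exists_pow_mem_of_index_ne_zero Subgroup.FiniteIndex.index_ne_zero b
  refine ⟨⟨a ^ m, ham⟩, ⟨b ^ n, hbn⟩, fun h ↦ hab ?_⟩
  refine commute_of_commute_zpow (Nat.cast_ne_zero.mpr hm.ne') (Nat.cast_ne_zero.mpr hn.ne') ?_
  simpa only [zpow_natCast, Subgroup.subtype_apply] using h.map N.subtype

/-- The conjugates `xⁿ y x⁻ⁿ` of a free generator `y` by the powers of another one, `x`, are free.
This is detected by the homomorphism to the semidirect product of `FreeGroup ℤ` and the shift that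
maps `x` to the shift and `y` to the generator `0`. -/
theorem exists_freeGroup_int_injective (hG : ∃ a b : G, ¬ Commute a b) :
    ∃ ψ : FreeGroup ℤ →* G, Function.Injective ψ := by
  classical
  obtain ⟨x, y, hxy⟩ : ∃ x y : Generators G, x ≠ y := by
    by_contra! h
    have : Subsingleton (Generators G) := ⟨h⟩
    obtain ⟨a, b, hab⟩ := hG
    exact hab ((isCyclic_of_subsingleton_generators (G := G)).isMulCommutative.is_comm.comm a b)
  let shift : Multiplicative ℤ →* MulAut (FreeGroup ℤ) :=
    { toFun k := FreeGroup.freeGroupCongr (Equiv.addRight k.toAdd)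
      map_one' := MulEquiv.ext fun z ↦ by simp
      map_mul' k l := MulEquiv.ext fun z ↦ by
        simp only [FreeGroup.freeGroupCongr_apply, MulAut.mul_apply, FreeGroup.map.comp]
        congr 1; congr 1; ext n; simp; ring }
  let F : G →* FreeGroup ℤ ⋊[shift] Multiplicative ℤ :=
    lift fun t ↦ if t = x then SemidirectProduct.inr (.ofAdd 1)
      else SemidirectProduct.inl (FreeGroup.of 0)
  let ψ : FreeGroup ℤ →* G := FreeGroup.lift fun n ↦ of x ^ n * of y * (of x ^ n)⁻¹
  have hF : F.comp ψ = SemidirectProduct.inl := by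
    ext n : 1
    simp only [F, ψ, MonoidHom.comp_apply, FreeGroup.lift_apply_of, map_mul, map_zpow,
      map_inv, lift_of, if_pos, if_neg hxy.symm]
    rw [← map_zpow, ← map_inv, ← SemidirectProduct.inl_aut]
    simp [shift]
  refine ⟨ψ, Function.Injective.of_comp (f := F) ?_⟩
  rw [← MonoidHom.coe_comp, hF]
  exact SemidirectProduct.inl_injective

theorem not_commute_map_inl_map_inr {α β : Type*} {z : FreeGroup α} {w : FreeGroup β} (hz : z ≠ 1)
    (hw : w ≠ 1) :
    ¬ Commute (FreeGroup.map (Sum.inl : α → α ⊕ β) z) (FreeGroup.map (Sum.inr : β → α ⊕ β) w) := by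
  intro h
  obtain ⟨m, n, hm, -, heq⟩ := exists_zpow_eq_zpow h
    ((map_ne_one_iff _ (FreeGroup.map_injective Sum.inl_injective)).mpr hz)
    ((map_ne_one_iff _ (FreeGroup.map_injective Sum.inr_injective)).mpr hw)
  let r : FreeGroup (α ⊕ β) →* FreeGroup α := FreeGroup.lift (Sum.elim FreeGroup.of 1)
  have hrl : r.comp (FreeGroup.map Sum.inl) = .id _ := by ext; simp [r]
  have hrr : r.comp (FreeGroup.map Sum.inr) = 1 := by ext; simp [r]
  have hzm : z ^ m = 1 := by
    simpa only [map_zpow, ← MonoidHom.comp_apply, hrl, hrr, MonoidHom.id_apply,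
      MonoidHom.one_apply, one_zpow] using congrArg r heq
  exact hz ((IsMulTorsionFree.zpow_eq_one_iff_left hm).mp hzm)

theorem exists_not_commute_of_forall_injective (hG : ∃ a b : G, ¬ Commute a b) (S : Subgroup G)
    (hS : ∀ ψ : FreeGroup (Fin 2) →* G, Function.Injective ψ → ∃ z, z ≠ 1 ∧ ψ z ∈ S) :
    ∃ a ∈ S, ∃ b ∈ S, ¬ Commute a b := by
  obtain ⟨ψ, hψ⟩ := exists_freeGroup_int_injective hG
  obtain ⟨e⟩ : Nonempty (Fin 2 ⊕ Fin 2 ↪ ℤ) := Cardinal.mk_le_aleph0.trans (Cardinal.aleph0_le_mk ℤ)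
  have hψe : Function.Injective (ψ.comp (FreeGroup.map e)) :=
    hψ.comp (FreeGroup.map_injective e.injective)
  obtain ⟨z, hz, hzS⟩ := hS ((ψ.comp (FreeGroup.map e)).comp (FreeGroup.map Sum.inl))
    (hψe.comp (FreeGroup.map_injective Sum.inl_injective))
  obtain ⟨w, hw, hwS⟩ := hS ((ψ.comp (FreeGroup.map e)).comp (FreeGroup.map Sum.inr))
    (hψe.comp (FreeGroup.map_injective Sum.inr_injective))
  exact ⟨_, hzS, _, hwS, fun h ↦ not_commute_map_inl_map_inr hz hw (.of_map hψe h)⟩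

/-- The edges `v → σ i v` form a forest. Each of them is charged to its endpoint with the longer
reduced word. -/
theorem sum_card_le_card_of_free {α V : Type*} [Fintype α]
    (O : Finset V) (E : α → Finset V) (σ : α → Equiv.Perm V) (h : V → FreeGroup α)
    (hE : ∀ i, ∀ v ∈ E i, v ∈ O ∧ σ i v ∈ O ∧ h (σ i v) = FreeGroup.of i * h v) :
    ∑ i, (E i).card ≤ O.card := by
  classical
  let charge : (_ : α) × V → V := fun p ↦
    if h p.2 ∈ FreeGroup.startsWith (p.1, false) then p.2 else σ p.1 p.2
  have hcharge : ∀ p ∈ Finset.univ.sigma E, charge p ∈ O ∧ ∃ b : Bool,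
      (h (charge p)).toWord[0]? = some (p.1, b) ∧
        p.2 = bif b then (σ p.1)⁻¹ (charge p) else charge p := by
    rintro ⟨i, v⟩ hv
    obtain ⟨hvO, hσvO, hmul⟩ := hE i v (Finset.mem_sigma.mp hv).2
    by_cases hstart : h v ∈ FreeGroup.startsWith (i, false)
    · simp only [charge, if_pos hstart]
      exact ⟨hvO, false, hstart, rfl⟩
    · simp only [charge, if_neg hstart]
      refine ⟨hσvO, true, ?_, ((σ i).symm_apply_apply v).symm⟩
      rw [hmul]
      exact FreeGroup.startsWith_mk_mul (w := (i, true)) (h v) hstart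
  rw [← Finset.card_sigma]
  refine Finset.card_le_card_of_injOn charge (fun p hp ↦ (hcharge p hp).1) ?_
  rintro ⟨i, v⟩ hp ⟨j, w⟩ hq heq
  obtain ⟨b, hb, hv⟩ := (hcharge _ hp).2
  obtain ⟨c, hc, hw⟩ := (hcharge _ hq).2
  rw [heq, hc] at hb
  obtain ⟨rfl, rfl⟩ := Prod.mk.inj (Option.some.inj hb)
  obtain rfl : v = w := hv.trans (heq ▸ hw.symm)
  rfl

end FreeGroup

namespace treeAut

section Action

open Stream'

variable {X : Type*}

instance : MulAction (treeAut X) (Stream' X) :=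
  inferInstanceAs (MulAction (treeAut X) (ℕ → X))

theorem take_eq_take_iff {n : ℕ} {w w' : Stream' X} :
    w.take n = w'.take n ↔ ∀ i < n, w.get i = w'.get i := by
  refine ⟨fun h i hi ↦ ?_, fun h ↦ List.ext_getElem (by simp only [length_take]) ?_⟩
  · exact Option.some.inj ((getElem?_take hi).symm.trans (h ▸ getElem?_take hi))
  · intro i hi _
    simpa only [take_get] using h i (by simpa only [length_take] using hi)

theorem take_smul_eq_take_smul {n : ℕ} (g : treeAut X) {w w' : Stream' X} :
    (g • w).take n = (g • w').take n ↔ w.take n = w'.take n := by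
  rw [take_eq_take_iff, take_eq_take_iff]
  exact (g.2 n w w').symm

theorem take_length_append (v : List X) (u : Stream' X) : (v ++ₛ u).take v.length = v := by
  rw [take_append_of_le_length _ _ _ le_rfl, List.take_length]

theorem ext_smul {g h : treeAut X} (H : ∀ u : Stream' X, g • u = h • u) : g = h :=
  Subtype.ext (Equiv.ext H)

variable [Nonempty X]

theorem exists_take_length_eq (v : List X) : ∃ w : Stream' X, w.take v.length = v :=
  ⟨_, take_length_append v (const (Classical.arbitrary X))⟩

noncomputable instance : SMul (treeAut X) (List X) where
  smul g v := (g • (v ++ₛ const (Classical.arbitrary X))).take v.length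

@[simp]
theorem length_smul (g : treeAut X) (v : List X) : (g • v).length = v.length :=
  length_take _ _

theorem smul_take (g : treeAut X) (w : Stream' X) (n : ℕ) : g • w.take n = (g • w).take n := by
  have hpad := take_length_append (w.take n) (const (Classical.arbitrary X))
  rw [length_take] at hpad
  calc g • w.take n = (g • (w.take n ++ₛ const (Classical.arbitrary X))).take n :=
        congrArg (fun m ↦ take m _) (length_take n w)
    _ = (g • w).take n := (take_smul_eq_take_smul g).mpr hpad

noncomputable instance : MulAction (treeAut X) (List X) where
  one_smul v := by
    obtain ⟨w, hw⟩ := exists_take_length_eq v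
    rw [← hw, smul_take, one_smul]
  mul_smul g h v := by
    obtain ⟨w, hw⟩ := exists_take_length_eq v
    rw [← hw, smul_take, smul_take, smul_take, mul_smul]

theorem smul_append_drop (g : treeAut X) (v : List X) (u : Stream' X) :
    (g • v) ++ₛ (g • (v ++ₛ u)).drop v.length = g • (v ++ₛ u) := by
  conv_lhs => enter [1]; rw [← take_length_append v u, smul_take]
  exact append_take_drop _ _

/-- The permutation of infinite sequences underlying the section of `g` at the word `v`. -/
noncomputable def secPerm (g : treeAut X) (v : List X) : Equiv.Perm (Stream' X) where
  toFun u := (g • (v ++ₛ u)).drop v.length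
  invFun u := (g⁻¹ • ((g • v) ++ₛ u)).drop v.length
  left_inv u := by simp only [smul_append_drop, inv_smul_smul, drop_append_stream]
  right_inv u := by
    have h := smul_append_drop g⁻¹ (g • v) u
    rw [inv_smul_smul, length_smul] at h
    beta_reduce
    rw [h, smul_inv_smul, ← length_smul g v, drop_append_stream]

theorem smul_append_secPerm (g : treeAut X) (v : List X) (u : Stream' X) :
    (g • v) ++ₛ secPerm g v u = g • (v ++ₛ u) :=
  smul_append_drop g v u

theorem take_secPerm_eq_take_secPerm (g : treeAut X) (v : List X) (n : ℕ) (u u' : Stream' X) :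
    (secPerm g v u).take n = (secPerm g v u').take n ↔ u.take n = u'.take n := by
  rw [← List.append_right_inj (g • v), append_take, append_take, smul_append_secPerm,
    smul_append_secPerm, take_smul_eq_take_smul, length_smul, ← append_take, ← append_take,
    List.append_right_inj]

/-- The section (also called restriction or state) `g|_v` of a tree automorphism `g` at the
word `v`, again a tree automorphism. -/
noncomputable def sec (g : treeAut X) (v : List X) : treeAut X where
  val := secPerm g v
  property n u u' :=
    (take_eq_take_iff.symm.trans (take_secPerm_eq_take_secPerm g v n u u').symm).trans
      take_eq_take_iff

theorem smul_append_stream (g : treeAut X) (v : List X) (u : Stream' X) :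
    g • (v ++ₛ u) = (g • v) ++ₛ (sec g v • u) :=
  (smul_append_secPerm g v u).symm

theorem smul_append (g : treeAut X) (v u : List X) : g • (v ++ u) = g • v ++ sec g v • u := by
  obtain ⟨w, hw⟩ := exists_take_length_eq u
  rw [← hw, append_take, smul_take, smul_append_stream, smul_take, append_take, length_smul]

theorem sec_eq_of_forall_smul {g h : treeAut X} {v : List X}
    (H : ∀ u : Stream' X, g • (v ++ₛ u) = (g • v) ++ₛ (h • u)) : sec g v = h :=
  ext_smul fun u ↦ append_right_injective _ _ _ ((smul_append_stream g v u).symm.trans (H u))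

@[simp]
theorem sec_nil (g : treeAut X) : sec g [] = g := rfl

@[simp]
theorem sec_one (v : List X) : sec (1 : treeAut X) v = 1 :=
  sec_eq_of_forall_smul fun u ↦ by simp only [one_smul]

theorem sec_mul (g h : treeAut X) (v : List X) : sec (g * h) v = sec g (h • v) * sec h v :=
  sec_eq_of_forall_smul fun u ↦ by simp only [mul_smul, smul_append_stream]

theorem sec_inv (g : treeAut X) (v : List X) : sec g⁻¹ v = (sec g (g⁻¹ • v))⁻¹ := by
  rw [eq_comm, inv_eq_iff_mul_eq_one, ← sec_mul, mul_inv_cancel, sec_one]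

theorem sec_append (g : treeAut X) (v u : List X) : sec g (v ++ u) = sec (sec g v) u :=
  sec_eq_of_forall_smul fun w ↦ by
    simp only [append_append_stream, smul_append_stream, smul_append]

end Action

section Growth

open Filter

variable {X : Type*}

section Words

variable [Finite X]

variable (X) in
/-- The finite set `X^n` of words of length `n`. -/
noncomputable def words (n : ℕ) : Finset (List X) :=
  (List.finite_length_eq X n).toFinset

@[simp]
theorem mem_words {n : ℕ} {v : List X} : v ∈ words X n ↔ v.length = n :=
  Set.Finite.mem_toFinset _

theorem sum_words_add {M : Type*} [AddCommMonoid M] (m n : ℕ) (f : List X → M) :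
    ∑ w ∈ words X (m + n), f w = ∑ v ∈ words X m, ∑ u ∈ words X n, f (v ++ u) := by
  rw [← Finset.sum_product']
  symm
  refine Finset.sum_nbij' (fun p ↦ p.1 ++ p.2) (fun w ↦ (w.take m, w.drop m)) ?_ ?_ ?_ ?_ ?_
  · simp +contextual
  · simp +contextual
  · rintro ⟨v, u⟩ h
    obtain rfl : v.length = m := mem_words.mp (Finset.mem_product.mp h).1
    simp
  · simp
  · simp

variable [Nonempty X]

theorem sum_words_smul {M : Type*} [AddCommMonoid M] (g : treeAut X) (n : ℕ) (f : List X → M) :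
    ∑ v ∈ words X n, f (g • v) = ∑ v ∈ words X n, f v :=
  Finset.sum_equiv (MulAction.toPerm g) (fun v ↦ by simp) fun _ _ ↦ rfl

variable (X) in
/-- The pointwise stabilizer of the `n`-th level of the tree. -/
noncomputable def levelStab (n : ℕ) : Subgroup (treeAut X) :=
  ⨅ v ∈ words X n, MulAction.stabilizer (treeAut X) v

theorem mem_levelStab {n : ℕ} {g : treeAut X} :
    g ∈ levelStab X n ↔ ∀ v : List X, v.length = n → g • v = v := by
  simp only [levelStab, Subgroup.mem_iInf, mem_words, MulAction.mem_stabilizer_iff]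

instance levelStab_finiteIndex (n : ℕ) : (levelStab X n).FiniteIndex := by
  refine Subgroup.finiteIndex_iInf' _ fun v _ ↦ ⟨?_⟩
  rw [MulAction.index_stabilizer]
  have hfin : (MulAction.orbit (treeAut X) v).Finite := by
    refine (List.finite_length_eq X v.length).subset ?_
    rintro _ ⟨g, rfl⟩
    exact length_smul g v
  exact (Set.ncard_pos hfin).mpr (MulAction.nonempty_orbit v) |>.ne'

instance comap_levelStab_finiteIndex {G : Type*} [Group G] (φ : G →* treeAut X) (n : ℕ) :
    ((levelStab X n).comap φ).FiniteIndex := by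
  refine ⟨?_⟩
  rw [Subgroup.index_comap]
  exact Subgroup.FiniteIndex.index_ne_zero (H := (levelStab X n).subgroupOf φ.range)

end Words

variable [Nonempty X]

/-- The homomorphism `z ↦ (φ z)|_v` arising from an action `φ` that fixes the word `v`. -/
noncomputable def secHom {G : Type*} [Group G] (φ : G →* treeAut X) (v : List X)
    (hv : ∀ z, φ z • v = v) : G →* treeAut X where
  toFun z := sec (φ z) v
  map_one' := by rw [map_one, sec_one]
  map_mul' z z' := by rw [map_mul, sec_mul, hv]

variable (X) in
/-- The group of finite-state automorphisms. -/
def finiteState : Subgroup (treeAut X) where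
  carrier := {g | (Set.range (sec g)).Finite}
  one_mem' := (Set.finite_singleton 1).subset (Set.range_subset_iff.mpr sec_one)
  mul_mem' {g h} hg hh := (hg.mul hh).subset <| Set.range_subset_iff.mpr fun v ↦
    sec_mul g h v ▸ Set.mul_mem_mul ⟨_, rfl⟩ ⟨_, rfl⟩
  inv_mem' {g} hg := hg.inv.subset <| Set.range_subset_iff.mpr fun v ↦
    Set.mem_inv.mpr ⟨g⁻¹ • v, by rw [sec_inv, inv_inv]⟩

theorem range_sec_sec_subset (g : treeAut X) (v : List X) :
    Set.range (sec (sec g v)) ⊆ Set.range (sec g) :=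
  Set.range_subset_iff.mpr fun u ↦ ⟨v ++ u, sec_append g v u⟩

theorem sec_mem_finiteState {g : treeAut X} (hg : g ∈ finiteState X) (v : List X) :
    sec g v ∈ finiteState X :=
  Set.Finite.subset hg (range_sec_sec_subset g v)

variable [Finite X]

open scoped Classical in
/-- The number of words of length `n` at which the section of `g` is not in `D`. -/
noncomputable def secCount (D : Subgroup (treeAut X)) (g : treeAut X) (n : ℕ) : ℕ :=
  ((words X n).filter fun v ↦ sec g v ∉ D).card

theorem secCount_eq_zero {D : Subgroup (treeAut X)} {g : treeAut X} {n : ℕ} :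
    secCount D g n = 0 ↔ ∀ v ∈ words X n, sec g v ∈ D := by
  simp only [secCount, Finset.card_eq_zero, Finset.filter_eq_empty_iff, not_not]

theorem secCount_add (D : Subgroup (treeAut X)) (g : treeAut X) (m n : ℕ) :
    secCount D g (m + n) = ∑ v ∈ words X m, secCount D (sec g v) n := by
  simp only [secCount, Finset.card_filter, sum_words_add]
  exact Finset.sum_congr rfl fun v _ ↦ Finset.sum_congr rfl fun u _ ↦ by rw [sec_append]

theorem secCount_mul_le (D : Subgroup (treeAut X)) (g h : treeAut X) (n : ℕ) :
    secCount D (g * h) n ≤ secCount D g n + secCount D h n := by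
  classical
  simp only [secCount, Finset.card_filter]
  rw [← sum_words_smul h n fun v ↦ if sec g v ∉ D then 1 else 0, ← Finset.sum_add_distrib]
  refine Finset.sum_le_sum fun v _ ↦ ?_
  have := D.mul_mem (x := sec g (h • v)) (y := sec h v)
  rw [sec_mul]
  split_ifs <;> first | omega | tauto

theorem secCount_inv (D : Subgroup (treeAut X)) (g : treeAut X) (n : ℕ) :
    secCount D g⁻¹ n = secCount D g n := by
  classical
  simp only [secCount, Finset.card_filter, sec_inv, inv_mem_iff]
  exact sum_words_smul g⁻¹ n fun v ↦ if sec g v ∉ D then 1 else 0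

theorem secCount_one (D : Subgroup (treeAut X)) (n : ℕ) : secCount D 1 n = 0 :=
  secCount_eq_zero.mpr fun v _ ↦ (sec_one v).symm ▸ D.one_mem

theorem secCount_sec_le (D : Subgroup (treeAut X)) (g : treeAut X) (v : List X) (n : ℕ) :
    secCount D (sec g v) n ≤ secCount D g (v.length + n) := by
  rw [secCount_add]
  exact Finset.single_le_sum (f := fun v ↦ secCount D (sec g v) n) (fun _ _ ↦ Nat.zero_le _)
    (mem_words.mpr rfl)

variable (X) in
/-- The group of finitary automorphisms. -/
def finitary : Subgroup (treeAut X) where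
  carrier := {g | ∀ᶠ n in atTop, secCount ⊥ g n = 0}
  one_mem' := .of_forall (secCount_one ⊥)
  mul_mem' {g h} hg hh := (hg.and hh).mono fun n hn ↦ by
    simpa [hn.1, hn.2] using secCount_mul_le ⊥ g h n
  inv_mem' {g} hg := hg.mono fun n hn ↦ (secCount_inv ⊥ g n).trans hn

/-- The group of automorphisms for which the number of sections on a level that do not belong to
`D` is bounded independently of the level. -/
def boundedModulo (D : Subgroup (treeAut X)) : Subgroup (treeAut X) where
  carrier := {g | ∃ C, ∀ n, secCount D g n ≤ C}
  one_mem' := ⟨0, fun n ↦ (secCount_one D n).le⟩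
  mul_mem' {g h} := fun ⟨C, hC⟩ ⟨C', hC'⟩ ↦
    ⟨C + C', fun n ↦ (secCount_mul_le D g h n).trans (add_le_add (hC n) (hC' n))⟩
  inv_mem' {g} := fun ⟨C, hC⟩ ↦ ⟨C, fun n ↦ (secCount_inv D g n).trans_le (hC n)⟩

variable (X) in
/-- A recursive description, without polynomials, of growth bounded by a polynomial of degree
`e - 1`: the finite-state automorphisms in `polyGrowth X e` form Sidki's group `P_{e-1}(X)`. -/
def polyGrowth : ℕ → Subgroup (treeAut X)
  | 0 => finitary X
  | e + 1 => boundedModulo (polyGrowth e)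

theorem sec_mem_polyGrowth {e : ℕ} {g : treeAut X} (hg : g ∈ polyGrowth X e) (v : List X) :
    sec g v ∈ polyGrowth X e := by
  cases e with
  | zero =>
    have hshift : Tendsto (v.length + ·) atTop atTop :=
      tendsto_atTop_mono (fun n ↦ Nat.le_add_left n _) tendsto_id
    exact (hshift.eventually hg).mono fun n hn ↦
      Nat.le_zero.mp ((secCount_sec_le ⊥ g v n).trans_eq hn)
  | succ e =>
    obtain ⟨C, hC⟩ := hg
    exact ⟨C, fun n ↦ (secCount_sec_le _ g v n).trans (hC _)⟩

theorem polyGrowth_mono : Monotone (polyGrowth X) := by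
  refine monotone_nat_of_le_succ fun e g hg ↦ ⟨0, fun n ↦ le_of_eq ?_⟩
  exact secCount_eq_zero.mpr fun v _ ↦ sec_mem_polyGrowth hg v

theorem mem_polyGrowth_of_forall_sec_mem {e m : ℕ} {g : treeAut X}
    (h : ∀ v ∈ words X m, sec g v ∈ polyGrowth X e) : g ∈ polyGrowth X e := by
  cases e with
  | zero =>
    have hsum : ∀ᶠ n in atTop, secCount ⊥ g (m + n) = 0 :=
      ((words X m).eventually_all.mpr h).mono fun n hn ↦ by
        rw [secCount_add, Finset.sum_eq_zero hn]
    simp only [add_comm m] at hsum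
    change ∀ᶠ n in atTop, secCount ⊥ g n = 0
    rw [← map_add_atTop_eq_nat m]
    exact hsum
  | succ e =>
    choose! C hC using h
    refine ⟨(∑ n ∈ Finset.range m, secCount (polyGrowth X e) g n) + ∑ v ∈ words X m, C v,
      fun n ↦ ?_⟩
    rcases lt_or_ge n m with hnm | hmn
    · exact (Finset.single_le_sum (f := secCount (polyGrowth X e) g) (fun _ _ ↦ Nat.zero_le _)
        (Finset.mem_range.mpr hnm)).trans (Nat.le_add_right _ _)
    · obtain ⟨k, rfl⟩ := Nat.exists_eq_add_of_le hmn
      rw [secCount_add]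
      exact (Finset.sum_le_sum fun v hv ↦ hC v hv k).trans (Nat.le_add_left _ _)

/-- If `g` recurs as its own section at `u`, then a section of `g` at another word `v` of the same
length is repeated at `uᵏv` for each `k`, and these contributions to the growth add up. -/
theorem sec_mem_polyGrowth_of_sec_eq_self {e : ℕ} {g : treeAut X} (hg : g ∈ polyGrowth X (e + 1))
    {u v : List X} (hu : sec g u = g) (hlen : v.length = u.length) (hne : v ≠ u) :
    sec g v ∈ polyGrowth X e := by
  by_contra hv
  obtain ⟨C, hC⟩ := hg
  have hpos (n : ℕ) : 1 ≤ secCount (polyGrowth X e) (sec g v) n :=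
    Nat.one_le_iff_ne_zero.mpr fun h0 ↦
      hv (mem_polyGrowth_of_forall_sec_mem (secCount_eq_zero.mp h0))
  have hgrow (k : ℕ) : k ≤ secCount (polyGrowth X e) g (u.length * k) := by
    induction k with
    | zero => exact Nat.zero_le _
    | succ k ih =>
      rw [mul_add_one, add_comm (u.length * k), secCount_add]
      calc k + 1 ≤ secCount (polyGrowth X e) (sec g u) (u.length * k)
              + secCount (polyGrowth X e) (sec g v) (u.length * k) := by
            rw [hu]
            exact add_le_add ih (hpos _)
        _ ≤ _ := Finset.add_le_sum (f := fun w ↦ secCount (polyGrowth X e) (sec g w) _)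
            (fun _ _ ↦ Nat.zero_le _) (mem_words.mpr rfl) (mem_words.mpr hlen) hne.symm
  exact absurd ((hgrow (C + 1)).trans (hC _)) (by omega)

end Growth

section PolynomialGrowth

open Filter Stream'

variable {X : Type*}

theorem wappend_eq_append {m : ℕ} (v : Fin m → X) (u : Stream' X) :
    wappend v u = List.ofFn v ++ₛ u := by
  refine Stream'.ext fun i ↦ ?_
  rcases lt_or_ge i m with hi | hi
  · rw [get_append_left _ _ _ (by simpa using hi), List.getElem_ofFn]
    exact dif_pos hi
  · obtain ⟨k, rfl⟩ := Nat.exists_eq_add_of_le hi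
    have h := get_append_right k (List.ofFn v) u
    rw [List.length_ofFn] at h
    rw [h]
    exact (dif_neg (by omega)).trans (congrArg u (by omega))

variable [Nonempty X]

theorem restrictFun_eq_sec (g : treeAut X) {m : ℕ} (v : Fin m → X) :
    restrictFun g.1 v = (sec g (List.ofFn v)).1 := by
  refine funext fun u : Stream' X ↦ ?_
  have h : restrictFun g.1 v u = (g • (List.ofFn v ++ₛ u)).drop m := by
    rw [← wappend_eq_append]
    exact funext fun j ↦ congrArg (g.1 (wappend v u)) (add_comm m j)
  have hlen : (g • List.ofFn v).length = m := by rw [length_smul, List.length_ofFn]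
  have hdrop := drop_append_stream (g • List.ofFn v) (sec g (List.ofFn v) • u)
  rw [hlen, ← smul_append_stream] at hdrop
  exact h.trans hdrop

theorem restrictPerm_eq_sec (g : treeAut X) {m : ℕ} (v : Fin m → X) :
    restrictPerm g.1 v = (sec g (List.ofFn v)).1 := by
  have hbij : Function.Bijective (restrictFun g.1 v) :=
    restrictFun_eq_sec g v ▸ (sec g (List.ofFn v)).1.bijective
  rw [restrictPerm, dif_pos hbij]
  exact Equiv.ext fun u ↦ congrFun (restrictFun_eq_sec g v) u

theorem sec_eq_one_of_restrictTrivial {g : treeAut X} {m : ℕ} {v : Fin m → X}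
    (h : RestrictTrivial g.1 v) : sec g (List.ofFn v) = 1 := by
  refine ext_smul fun u ↦ (congrFun (restrictFun_eq_sec g v) u).symm.trans (funext fun j ↦ ?_)
  exact (h (wappend v u) (fun i ↦ by simp [wappend]) _ (Nat.le_add_right m j)).trans
    (by simp [wappend])

theorem mem_finiteState_of_finiteState {g : treeAut X} (h : FiniteState g.1) :
    g ∈ finiteState X := by
  refine Set.Finite.subset (h.preimage Subtype.val_injective.injOn) ?_
  rintro _ ⟨v, rfl⟩
  exact ⟨v.length, v.get, by rw [restrictPerm_eq_sec, List.ofFn_get]⟩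

theorem ncard_range_sec_sec_lt {g : treeAut X} (hf : g ∈ finiteState X) {v : List X}
    (hv : ∀ u, sec (sec g v) u ≠ g) :
    (Set.range (sec (sec g v))).ncard < (Set.range (sec g)).ncard :=
  Set.ncard_lt_ncard
    ⟨range_sec_sec_subset g v, fun hsub ↦ (hsub ⟨[], sec_nil g⟩).elim hv⟩ hf

variable [Finite X]

theorem secCount_bot_le_thetaGrowth (g : treeAut X) (n : ℕ) :
    secCount ⊥ g n ≤ thetaGrowth g.1 n := by
  classical
  rw [secCount, thetaGrowth, ← Set.ncard_coe_finset, ← Set.ncard_image_of_injective _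
    (List.ofFn_injective (n := n) (α := X))]
  refine Set.ncard_le_ncard (fun v hmem ↦ ?_) (Set.toFinite _)
  obtain ⟨hvn, hv⟩ := Finset.mem_filter.mp hmem
  obtain rfl := mem_words.mp hvn
  refine ⟨v.get, fun h ↦ hv (Subgroup.mem_bot.mpr ?_), List.ofFn_get v⟩
  exact List.ofFn_get v ▸ sec_eq_one_of_restrictTrivial h

theorem mem_polyGrowth_zero_of_isFinitary {g : treeAut X} (h : IsFinitary g.1) :
    g ∈ polyGrowth X 0 := by
  obtain ⟨n, hn⟩ := h
  refine eventually_atTop.mpr ⟨n, fun m hm ↦ Nat.le_zero.mp ?_⟩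
  refine (secCount_bot_le_thetaGrowth g m).trans_eq (Set.ncard_eq_zero (Set.toFinite _) |>.mpr ?_)
  exact Set.eq_empty_of_forall_notMem fun v hv ↦ hv fun u _ i hi ↦ hn u i (hm.trans hi)

theorem two_pow_le_secCount {D : Subgroup (treeAut X)} {g : treeAut X} (hg : g ∉ D)
    {u v : List X} (hu : sec g u = g) (hv : sec g v = g) (hlen : v.length = u.length)
    (hne : v ≠ u) (j : ℕ) : 2 ^ j ≤ secCount D g (u.length * j) := by
  induction j with
  | zero => exact Finset.card_pos.mpr ⟨[], by simp [hg]⟩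
  | succ j ih =>
    rw [mul_add_one, add_comm (u.length * j), secCount_add]
    calc 2 ^ (j + 1) ≤ secCount D (sec g u) (u.length * j)
            + secCount D (sec g v) (u.length * j) := by
          rw [hu, hv, pow_succ, mul_two]
          exact add_le_add ih ih
      _ ≤ _ := Finset.add_le_sum (f := fun w ↦ secCount D (sec g w) _)
          (fun _ _ ↦ Nat.zero_le _) (mem_words.mpr rfl) (mem_words.mpr hlen) hne.symm

theorem exists_eval_mul_lt_two_pow (p : Polynomial ℕ) (l : ℕ) :
    ∃ j : ℕ, p.eval (l * j) < 2 ^ j := by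
  have hlog : Real.log 2 ≠ 0 := (Real.log_pos one_lt_two).ne'
  let q : Polynomial ℝ :=
    (p.map (Nat.castRingHom ℝ)).comp (.C (l / Real.log 2) * .X)
  have hlim : Tendsto (fun j : ℕ ↦ (j : ℝ) * Real.log 2) atTop atTop :=
    tendsto_natCast_atTop_atTop.atTop_mul_const (Real.log_pos one_lt_two)
  obtain ⟨j, hj⟩ := ((q.tendsto_div_exp_atTop.comp hlim).eventually_lt_const one_pos).exists
  have hq : q.eval (j * Real.log 2) = (p.eval (l * j) : ℕ) := by
    have harg : (l / Real.log 2 * (j * Real.log 2) : ℝ) = ((l * j : ℕ) : ℝ) := by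
      field_simp
      push_cast
      ring
    simp only [q, Polynomial.eval_comp, Polynomial.eval_mul, Polynomial.eval_C, Polynomial.eval_X,
      harg, Polynomial.eval_natCast_map, eq_natCast, Nat.cast_id]
  refine ⟨j, ?_⟩
  rw [Function.comp_apply, hq, Real.exp_nat_mul, Real.exp_log two_pos, div_lt_one (by positivity)]
    at hj
  exact_mod_cast hj

/-- The growth function `n ↦ #{v ∈ Xⁿ | g|_v ≠ 1}` of `g` is bounded by a polynomial. -/
def HasPolynomialGrowth (g : treeAut X) : Prop :=
  ∃ p : Polynomial ℕ, ∀ n, secCount ⊥ g n ≤ p.eval n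

theorem hasPolynomialGrowth_sec {g : treeAut X} (hg : HasPolynomialGrowth g) (v : List X) :
    HasPolynomialGrowth (sec g v) := by
  obtain ⟨p, hp⟩ := hg
  exact ⟨p.comp (.C v.length + .X), fun n ↦ (secCount_sec_le ⊥ g v n).trans (by simpa using hp _)⟩

theorem eq_of_sec_eq_self {g : treeAut X} (hg : HasPolynomialGrowth g)
    (h1 : g ≠ 1) {u v : List X} (hu : sec g u = g) (hv : sec g v = g)
    (hlen : v.length = u.length) : v = u := by
  by_contra hne
  obtain ⟨p, hp⟩ := hg
  obtain ⟨j, hj⟩ := exists_eval_mul_lt_two_pow p u.length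
  have hgrow := two_pow_le_secCount (D := ⊥) (Subgroup.mem_bot.not.mpr h1) hu hv hlen hne j
  exact absurd (hgrow.trans (hp _)) hj.not_ge

/-- Two words of the same length with equal sections from which `g` recurs as a section would
yield two loops at `g`, so such words on a fixed level are counted by their sections. -/
theorem mem_polyGrowth_of_hasPolynomialGrowth {g : treeAut X} (hg : HasPolynomialGrowth g)
    (hf : g ∈ finiteState X) : g ∈ polyGrowth X (Set.range (sec g)).ncard := by
  induction hc : (Set.range (sec g)).ncard using Nat.strong_induction_on
    generalizing g with | _ c ih
  subst hc
  rcases eq_or_ne g 1 with rfl | h1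
  · exact one_mem _
  obtain ⟨c, hc⟩ := Nat.exists_eq_add_one.mpr ((Set.ncard_pos hf).mpr (Set.range_nonempty _))
  rw [hc] at ih ⊢
  have hrecur (v : List X) (hv : sec g v ∉ polyGrowth X c) :
      ∃ u, sec (sec g v) u = g := by
    by_contra! hno
    have hlt := hc ▸ ncard_range_sec_sec_lt hf hno
    exact hv (polyGrowth_mono (Nat.lt_succ_iff.mp hlt)
      (ih _ hlt (hasPolynomialGrowth_sec hg v) (sec_mem_finiteState hf v) rfl))
  refine ⟨(Set.range (sec g)).ncard, fun n ↦ ?_⟩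
  rw [Set.ncard_eq_toFinset_card _ hf]
  refine Finset.card_le_card_of_injOn (sec g) (fun v _ ↦ hf.mem_toFinset.mpr ⟨v, rfl⟩)
    fun v hv v' hv' heq ↦ ?_
  simp only [Finset.coe_filter, mem_words, Set.mem_ofPred_eq] at hv hv'
  obtain ⟨u, hu⟩ := hrecur v hv.2
  refine List.append_cancel_right (eq_of_sec_eq_self hg h1 (u := v' ++ u) (v := v ++ u) ?_ ?_ ?_)
  · rw [sec_append, ← heq, hu]
  · rw [sec_append, hu]
  · rw [List.length_append, List.length_append, hv.1, hv'.1]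

theorem finitary_le_finiteState : finitary X ≤ finiteState X := by
  intro g hg
  obtain ⟨N, hN⟩ := eventually_atTop.mp hg
  refine (((List.finite_length_lt X N).image (sec g)).union (Set.finite_singleton 1)).subset ?_
  rintro _ ⟨v, rfl⟩
  rcases lt_or_ge v.length N with hlt | hge
  · exact .inl ⟨v, hlt, rfl⟩
  · exact .inr (secCount_eq_zero.mp (hN _ hge) v (mem_words.mpr rfl))

theorem exists_mem_finiteState_inf_polyGrowth_of_memP {d : ℤ} {g : treeAut X} (h : MemP d g.1) :
    ∃ e, g ∈ finiteState X ⊓ polyGrowth X e := by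
  rcases h.2 with ⟨-, hfin⟩ | ⟨-, hfs, p, -, hp⟩
  · have h0 := mem_polyGrowth_zero_of_isFinitary hfin
    exact ⟨0, finitary_le_finiteState h0, h0⟩
  · have hstate := mem_finiteState_of_finiteState hfs
    exact ⟨_, hstate, mem_polyGrowth_of_hasPolynomialGrowth
      ⟨p, fun n ↦ (secCount_bot_le_thetaGrowth g n).trans (hp n)⟩ hstate⟩

end PolynomialGrowth

section ConeStab

open Stream'

variable {X : Type*}

/-- The pointwise stabilizer of the cone `v·X^ω`, that is, the automorphisms that fix the word `v`
and have trivial section there. -/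
def coneStab (v : List X) : Subgroup (treeAut X) :=
  fixingSubgroup (treeAut X) (Set.range fun u : Stream' X ↦ v ++ₛ u)

theorem mem_coneStab {g : treeAut X} {v : List X} :
    g ∈ coneStab v ↔ ∀ u : Stream' X, g • (v ++ₛ u) = v ++ₛ u := by
  simp only [coneStab, mem_fixingSubgroup_iff, Set.forall_mem_range]

theorem coneStab_le_coneStab_append (v u : List X) : coneStab v ≤ coneStab (v ++ u) := by
  intro g hg
  rw [mem_coneStab] at hg ⊢
  exact fun t ↦ append_append_stream v u t ▸ hg _

theorem eq_one_of_forall_mem_coneStab {g : treeAut X} (n : ℕ)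
    (h : ∀ v : List X, v.length = n → g ∈ coneStab v) : g = 1 := by
  refine ext_smul fun w ↦ ?_
  have hw := mem_coneStab.mp (h (w.take n) (length_take n w)) (w.drop n)
  rwa [append_take_drop, ← one_smul (treeAut X) w] at hw

section

variable [Nonempty X]

theorem mem_coneStab_iff_sec_eq_one {g : treeAut X} {v : List X} (hv : g • v = v) :
    g ∈ coneStab v ↔ sec g v = 1 := by
  simp only [mem_coneStab, smul_append_stream, hv]
  exact ⟨fun h ↦ ext_smul fun u ↦ append_right_injective _ _ _ (h u), fun h u ↦ by rw [h, one_smul]⟩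

theorem eq_one_of_sec_eq_self {g : treeAut X} {u : List X} (hne : u ≠ []) (hu : g • u = u)
    (hsec : sec g u = g) (h : ∀ v : List X, v.length = u.length → v ≠ u → g ∈ coneStab v) :
    g = 1 := by
  have htake (k : ℕ) (w : Stream' X) :
      (g • w).take (u.length * k) = w.take (u.length * k) := by
    induction k generalizing w with
    | zero => rfl
    | succ k ih =>
      rw [mul_add_one, add_comm, ← append_take_drop u.length w]
      by_cases hw : w.take u.length = u
      · rw [hw, smul_append_stream, hu, hsec, ← append_take, ← append_take, ih]
      · rw [mem_coneStab.mp (h _ (length_take _ _) hw)]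
  refine ext_smul fun w ↦ Stream'.ext fun i ↦ ?_
  have hi : i < u.length * (i + 1) :=
    (Nat.lt_succ_self i).trans_le (Nat.le_mul_of_pos_left _ (List.length_pos_of_ne_nil hne))
  rw [one_smul]
  exact take_eq_take_iff.mp (htake (i + 1) w) i hi

end

section

variable [Finite X]

theorem exists_forall_take_of_forall_exists_take {P : List X → Prop}
    (hP : ∀ v u, P v → P (v ++ u)) (h : ∀ w : Stream' X, ∃ n, P (w.take n)) :
    ∃ n, ∀ w : Stream' X, P (w.take n) := by
  let _ : TopologicalSpace X := ⊥
  have : DiscreteTopology X := ⟨rfl⟩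
  have hopen (n : ℕ) : IsOpen {w : ℕ → X | P (take n w)} := by
    have htake (w : Stream' X) : take n w = List.ofFn fun i : Fin n ↦ w i :=
      List.ext_getElem (by simp) fun i _ _ ↦ by rw [take_get, List.getElem_ofFn]; rfl
    have hpre : {w : ℕ → X | P (take n w)} =
        (fun (w : ℕ → X) (i : Fin n) ↦ w i) ⁻¹' {f | P (List.ofFn f)} :=
      Set.ext fun w ↦ iff_of_eq (congrArg P (htake w))
    rw [hpre]
    exact (isOpen_discrete _).preimage (by fun_prop)
  have hmono : Monotone fun n ↦ {w : ℕ → X | P (take n w)} :=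
    monotone_nat_of_le_succ fun n (w : Stream' X) hw ↦
      show P (take (n + 1) w) from take_succ' n ▸ hP _ _ hw
  obtain ⟨n, hn⟩ := isCompact_univ.elim_directed_cover _ hopen
    (fun w _ ↦ Set.mem_iUnion.mpr (h w)) hmono.directed_le
  exact ⟨n, fun w ↦ hn (Set.mem_univ w)⟩

variable [Nonempty X] {G : Type*} [Group G] [IsFreeGroup G] [Nontrivial G]

theorem exists_ne_one_forall_mem_coneStab (φ : G →* treeAut X) {n : ℕ} {s : Finset (List X)}
    (hs : s ⊆ words X n) (h : ∀ v ∈ s, ∃ z ≠ 1, φ z ∈ coneStab v) :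
    ∃ z ≠ 1, ∀ v ∈ s, φ z ∈ coneStab v := by
  let N := (levelStab X n).comap φ
  have hpow {z : G} (hz : z ≠ 1) : ∃ k, z ^ k ≠ 1 ∧ z ^ k ∈ N := by
    obtain ⟨k, hk, -, hkN⟩ := N.exists_pow_mem_of_index_ne_zero Subgroup.FiniteIndex.index_ne_zero z
    exact ⟨k, by simp [hz, hk.ne'], hkN⟩
  have hfix (v : {v : List X // v.length = n}) (z : N) : φ z • v.1 = v.1 :=
    mem_levelStab.mp z.2 v v.2
  have : Nontrivial N := by
    obtain ⟨z, hz⟩ := exists_ne (1 : G)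
    obtain ⟨k, hk, hkN⟩ := hpow hz
    exact ⟨⟨_, hkN⟩, 1, fun heq ↦ hk (congrArg Subtype.val heq)⟩
  obtain ⟨z, hz, hzs⟩ := exists_ne_one_forall_map_eq_one (s.subtype (·.length = n))
    (fun v ↦ secHom (φ.comp N.subtype) v (hfix v)) fun v hv hinj ↦ by
      obtain ⟨z, hz, hzv⟩ := h v (Finset.mem_subtype.mp hv)
      obtain ⟨k, hk, hkN⟩ := hpow hz
      refine hk (congrArg Subtype.val (hinj (a₁ := ⟨z ^ k, hkN⟩) (a₂ := 1) ?_))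
      rw [map_one]
      refine (mem_coneStab_iff_sec_eq_one (hfix v ⟨z ^ k, hkN⟩)).mp ?_
      exact map_pow φ z k ▸ pow_mem hzv k
  refine ⟨z, by simpa using hz, fun v hv ↦ ?_⟩
  have hlen := mem_words.mp (hs hv)
  exact (mem_coneStab_iff_sec_eq_one (hfix ⟨v, hlen⟩ z)).mpr
    (hzs ⟨v, hlen⟩ (Finset.mem_subtype.mpr hv))

/-- If every germ had a kernel, then by compactness so would the sections at each word of some
level, and the free group would contain a nontrivial common element of these kernels. -/
theorem exists_forall_eq_one_of_mem_coneStab {φ : G →* treeAut X} (hφ : Function.Injective φ) :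
    ∃ w : Stream' X, ∀ n z, φ z ∈ coneStab (w.take n) → z = 1 := by
  by_contra! hcon
  have hext (v u : List X) : (∃ z ≠ 1, φ z ∈ coneStab v) → ∃ z ≠ 1, φ z ∈ coneStab (v ++ u) :=
    fun ⟨z, hz, hzv⟩ ↦ ⟨z, hz, coneStab_le_coneStab_append v u hzv⟩
  obtain ⟨n, hn⟩ := exists_forall_take_of_forall_exists_take hext fun w ↦
    let ⟨n, z, hzw, hz⟩ := hcon w; ⟨n, z, hz, hzw⟩
  obtain ⟨z, hz, hzn⟩ := exists_ne_one_forall_mem_coneStab φ (subset_refl (words X n))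
    fun v hv ↦ by
      obtain ⟨w, hw⟩ := exists_take_length_eq v
      rw [← hw, mem_words.mp hv]
      exact hn w
  refine hz (hφ ((eq_one_of_forall_mem_coneStab n fun v hv ↦ ?_).trans (map_one φ).symm))
  exact hzn v (mem_words.mpr hv)

end

end ConeStab

section AtomlessMass

open Filter Topology

variable {X : Type*} [Finite X]

/-- An atomless finite measure on the boundary `X^ω`, encoded by its values `μ v` on the cones
`v·X^ω`. Atomlessness is required uniformly, which by compactness is no restriction. -/
structure IsAtomlessMass (μ : List X → ℝ) : Prop where
  nonneg (v : List X) : 0 ≤ μ v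
  sum_append (v : List X) (n : ℕ) : ∑ u ∈ words X n, μ (v ++ u) = μ v
  exists_forall_le {ε : ℝ} (hε : 0 < ε) : ∃ n, ∀ v : List X, n ≤ v.length → μ v ≤ ε

theorem IsAtomlessMass.comp_append {μ : List X → ℝ} (hμ : IsAtomlessMass μ) (v : List X) :
    IsAtomlessMass fun u ↦ μ (v ++ u) where
  nonneg _ := hμ.nonneg _
  sum_append u n := by simpa only [List.append_assoc] using hμ.sum_append (v ++ u) n
  exists_forall_le hε := (hμ.exists_forall_le hε).imp fun n hn u hu ↦
    hn _ (hu.trans (List.length_append ▸ Nat.le_add_left _ _))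

variable [Nonempty X]

open scoped Classical in
/-- The mass of the words of length `n` at which `g` has nontrivial section. -/
noncomputable def nontrivMass (μ : List X → ℝ) (g : treeAut X) (n : ℕ) : ℝ :=
  ∑ v ∈ words X n with sec g v ≠ 1, μ v

theorem nontrivMass_add (μ : List X → ℝ) (g : treeAut X) (m n : ℕ) :
    nontrivMass μ g (m + n) =
      ∑ v ∈ words X m, nontrivMass (fun u ↦ μ (v ++ u)) (sec g v) n := by
  simp only [nontrivMass, Finset.sum_filter, sum_words_add]
  exact Finset.sum_congr rfl fun v _ ↦ Finset.sum_congr rfl fun u _ ↦ by rw [sec_append]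

theorem nontrivMass_eq_zero {μ : List X → ℝ} {g : treeAut X} {n : ℕ} (h : secCount ⊥ g n = 0) :
    nontrivMass μ g n = 0 := by
  classical
  have htriv : ∀ v ∈ words X n, ¬ sec g v ≠ 1 :=
    fun v hv ↦ not_not.mpr (secCount_eq_zero.mp h v hv)
  rw [nontrivMass, Finset.filter_false_of_mem htriv, Finset.sum_empty]

namespace IsAtomlessMass

variable {μ : List X → ℝ} (hμ : IsAtomlessMass μ)

include hμ

theorem nontrivMass_nonneg (g : treeAut X) (n : ℕ) : 0 ≤ nontrivMass μ g n :=
  Finset.sum_nonneg fun v _ ↦ hμ.nonneg v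

theorem nontrivMass_le (g : treeAut X) (n : ℕ) : nontrivMass μ g n ≤ μ [] := by
  classical
  rw [← hμ.sum_append [] n]
  exact Finset.sum_le_sum_of_subset_of_nonneg (Finset.filter_subset _ _) fun v _ _ ↦ hμ.nonneg v

theorem nontrivMass_add_le {D : Subgroup (treeAut X)} {g : treeAut X} {m : ℕ} {ε : ℝ}
    (hε : ∀ v ∈ words X m, μ v ≤ ε) (n : ℕ) [DecidablePred fun v ↦ sec g v ∈ D] :
    nontrivMass μ g (m + n) ≤
      ∑ v ∈ words X m with sec g v ∈ D, nontrivMass (fun u ↦ μ (v ++ u)) (sec g v) n +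
        secCount D g m * ε := by
  classical
  rw [nontrivMass_add, ← Finset.sum_filter_add_sum_filter_not _ fun v ↦ sec g v ∈ D]
  gcongr
  rw [secCount, ← nsmul_eq_mul]
  convert Finset.sum_le_card_nsmul _ _ ε fun v hv ↦ ?_
  have hle := (hμ.comp_append v).nontrivMass_le (sec g v) n
  rw [List.append_nil] at hle
  exact hle.trans (hε v (Finset.mem_filter.mp hv).1)

end IsAtomlessMass

theorem tendsto_nontrivMass {e : ℕ} {g : treeAut X} (hg : g ∈ polyGrowth X e) {μ : List X → ℝ}
    (hμ : IsAtomlessMass μ) : Tendsto (nontrivMass μ g) atTop (𝓝 0) := by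
  classical
  induction e generalizing g μ with
  | zero => exact tendsto_const_nhds.congr' (hg.mono fun n hn ↦ (nontrivMass_eq_zero hn).symm)
  | succ e ih =>
    obtain ⟨C, hC⟩ := hg
    refine tendsto_order.mpr ⟨fun a ha ↦ .of_forall fun n ↦ ha.trans_le (hμ.nontrivMass_nonneg g n),
      fun ε hε ↦ ?_⟩
    obtain ⟨m, hm⟩ := hμ.exists_forall_le (ε := ε / 2 / (C + 1)) (by positivity)
    have hgood : Tendsto (fun n ↦ ∑ v ∈ words X m with sec g v ∈ polyGrowth X e,
        nontrivMass (fun u ↦ μ (v ++ u)) (sec g v) n) atTop (𝓝 0) := by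
      simpa only [Finset.sum_const_zero] using tendsto_finsetSum _ fun v hv ↦
        ih (Finset.mem_filter.mp hv).2 (hμ.comp_append v)
    have hbad : secCount (polyGrowth X e) g m * (ε / 2 / (C + 1)) ≤ ε / 2 := by
      rw [mul_div_assoc', div_le_iff₀ (by positivity), mul_comm]
      have hCm : (secCount (polyGrowth X e) g m : ℝ) ≤ C := by exact_mod_cast hC m
      gcongr
      linarith
    rw [← map_add_atTop_eq_nat m, eventually_map]
    filter_upwards [hgood.eventually_lt_const (half_pos hε)] with n hn
    rw [add_comm n m]
    have hle := hμ.nontrivMass_add_le (D := polyGrowth X e) (g := g)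
      (fun v hv ↦ hm v (mem_words.mp hv).ge) n
    linarith

end AtomlessMass

section OrbitMass

open Filter Topology Stream'

variable {X G : Type*} [Finite X] [Group G] {φ : G →* treeAut X} {w : Stream' X} {n : ℕ}
  {v : List X}

variable (φ w n) in
open scoped Classical in
/-- The beginnings of length `n` of the points in the orbit of `w`. -/
noncomputable def orbitPrefixes : Finset (List X) :=
  (words X n).filter fun v ↦ ∃ z, (φ z • w).take n = v

theorem mem_orbitPrefixes : v ∈ orbitPrefixes φ w n ↔ ∃ z, (φ z • w).take n = v := by
  classical
  simp only [orbitPrefixes, Finset.mem_filter, mem_words, and_iff_right_iff_imp]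
  rintro ⟨z, rfl⟩
  exact length_take n _

theorem length_eq_of_mem_orbitPrefixes (hv : v ∈ orbitPrefixes φ w n) : v.length = n := by
  obtain ⟨z, rfl⟩ := mem_orbitPrefixes.mp hv
  exact length_take n _

theorem orbitPrefixes_subset_words : orbitPrefixes φ w n ⊆ words X n :=
  fun _ hv ↦ mem_words.mpr (length_eq_of_mem_orbitPrefixes hv)

theorem card_orbitPrefixes_pos : 0 < (orbitPrefixes φ w n).card :=
  Finset.card_pos.mpr ⟨_, mem_orbitPrefixes.mpr ⟨1, rfl⟩⟩

theorem mem_orbitPrefixes_of_append {u : List X} (h : v ++ u ∈ orbitPrefixes φ w (v ++ u).length) :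
    v ∈ orbitPrefixes φ w v.length := by
  obtain ⟨z, hz⟩ := mem_orbitPrefixes.mp h
  have happ := append_take_drop (v ++ u).length (φ z • w)
  rw [hz, append_append_stream] at happ
  exact mem_orbitPrefixes.mpr ⟨z, by rw [← happ, take_length_append]⟩

theorem eventually_le_card_orbitPrefixes (hinf : (Set.range fun z ↦ φ z • w).Infinite) (K : ℕ) :
    ∀ᶠ n in atTop, K ≤ (orbitPrefixes φ w n).card := by
  classical
  obtain ⟨s, hs, rfl⟩ := hinf.exists_subset_card_eq K
  have hsep : ∀ᶠ n in atTop, ∀ p ∈ s.offDiag, p.1.take n ≠ p.2.take n := by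
    refine s.offDiag.eventually_all.mpr fun p hp ↦ ?_
    obtain ⟨i, hi⟩ : ∃ i, p.1.get i ≠ p.2.get i := by
      by_contra! h
      exact (Finset.mem_offDiag.mp hp).2.2 (Stream'.ext h)
    filter_upwards [eventually_gt_atTop i] with n hn htake
    exact hi (take_eq_take_iff.mp htake i hn)
  refine hsep.mono fun n hn ↦ Finset.card_le_card_of_injOn (take n) (fun t ht ↦ ?_) ?_
  · obtain ⟨z, rfl⟩ := hs ht
    exact mem_orbitPrefixes.mpr ⟨z, rfl⟩
  · exact fun t ht t' ht' heq ↦ by_contra fun hne ↦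
      hn (t, t') (Finset.mem_offDiag.mpr ⟨ht, ht', hne⟩) heq

variable (φ w) in
open scoped Classical in
/-- The uniform distribution on `orbitPrefixes φ w n` for every `n`. These distributions are
compatible and define a `G`-invariant mass on the closure of the orbit of `w`. -/
noncomputable def orbitMass (v : List X) : ℝ :=
  if v ∈ orbitPrefixes φ w v.length then ((orbitPrefixes φ w v.length).card : ℝ)⁻¹ else 0

theorem orbitMass_of_mem (hv : v ∈ orbitPrefixes φ w n) :
    orbitMass φ w v = ((orbitPrefixes φ w n).card : ℝ)⁻¹ := by
  obtain rfl := length_eq_of_mem_orbitPrefixes hv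
  exact if_pos hv

theorem orbitMass_of_notMem (hv : v ∈ words X n) (h : v ∉ orbitPrefixes φ w n) :
    orbitMass φ w v = 0 := by
  obtain rfl := mem_words.mp hv
  exact if_neg h

theorem sum_filter_words_orbitMass (p : List X → Prop) [DecidablePred p] (n : ℕ) :
    ∑ v ∈ words X n with p v, orbitMass φ w v =
      ((orbitPrefixes φ w n).filter p).card / (orbitPrefixes φ w n).card := by
  have hsub : (orbitPrefixes φ w n).filter p ⊆ (words X n).filter p :=
    Finset.filter_subset_filter p orbitPrefixes_subset_words
  rw [← Finset.sum_subset hsub, div_eq_mul_inv, ← nsmul_eq_mul, ← Finset.sum_const]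
  · exact Finset.sum_congr rfl fun v hv ↦ orbitMass_of_mem (Finset.mem_filter.mp hv).1
  · intro v hv hmem
    obtain ⟨hv, hp⟩ := Finset.mem_filter.mp hv
    exact orbitMass_of_notMem hv fun h ↦ hmem (Finset.mem_filter.mpr ⟨h, hp⟩)

theorem sum_orbitMass (n : ℕ) : ∑ v ∈ words X n, orbitMass φ w v = 1 := by
  have hcard : ((orbitPrefixes φ w n).card : ℝ) ≠ 0 := by
    exact_mod_cast card_orbitPrefixes_pos.ne'
  simpa [hcard] using sum_filter_words_orbitMass (φ := φ) (w := w) (fun _ ↦ True) n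

variable [Nonempty X]

theorem smul_mem_orbitPrefixes_iff (z : G) :
    φ z • v ∈ orbitPrefixes φ w n ↔ v ∈ orbitPrefixes φ w n := by
  suffices h : ∀ (z : G) (v : List X), v ∈ orbitPrefixes φ w n → φ z • v ∈ orbitPrefixes φ w n from
    ⟨fun hz ↦ by simpa only [map_inv, inv_smul_smul] using h z⁻¹ _ hz, h z v⟩
  intro z v hv
  obtain ⟨y, rfl⟩ := mem_orbitPrefixes.mp hv
  exact mem_orbitPrefixes.mpr ⟨z * y, by rw [smul_take, map_mul, mul_smul]⟩

theorem exists_smul_eq_of_mem_orbitPrefixes {v' : List X} (hv : v ∈ orbitPrefixes φ w n)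
    (hv' : v' ∈ orbitPrefixes φ w n) : ∃ z, φ z • v = v' := by
  obtain ⟨y, rfl⟩ := mem_orbitPrefixes.mp hv
  obtain ⟨y', rfl⟩ := mem_orbitPrefixes.mp hv'
  exact ⟨y' * y⁻¹, by rw [smul_take, ← mul_smul, ← map_mul, inv_mul_cancel_right]⟩

theorem orbitMass_smul (z : G) (v : List X) : orbitMass φ w (φ z • v) = orbitMass φ w v := by
  classical
  unfold orbitMass
  rw [length_smul]
  exact if_congr (smul_mem_orbitPrefixes_iff z) rfl rfl

/-- Uniqueness of the invariant probability on `orbitPrefixes φ w n`. -/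
theorem eq_orbitMass {f : List X → ℝ} (hsum : ∑ v ∈ words X n, f v = 1)
    (hsmul : ∀ z v, v ∈ words X n → f (φ z • v) = f v)
    (hsupp : ∀ v ∈ words X n, v ∉ orbitPrefixes φ w n → f v = 0) (hv : v ∈ words X n) :
    f v = orbitMass φ w v := by
  obtain rfl := mem_words.mp hv
  rw [orbitMass]
  split_ifs with hmem
  · refine eq_inv_of_mul_eq_one_right ?_
    rw [← hsum, ← Finset.sum_subset orbitPrefixes_subset_words hsupp, ← nsmul_eq_mul,
      ← Finset.sum_const]
    refine Finset.sum_congr rfl fun u hu ↦ ?_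
    obtain ⟨z, rfl⟩ := exists_smul_eq_of_mem_orbitPrefixes hmem hu
    exact (hsmul z v hv).symm
  · exact hsupp v hv hmem

theorem sum_orbitMass_append (v : List X) (m : ℕ) :
    ∑ u ∈ words X m, orbitMass φ w (v ++ u) = orbitMass φ w v := by
  refine eq_orbitMass (f := fun v ↦ ∑ u ∈ words X m, orbitMass φ w (v ++ u)) (n := v.length)
    ?_ (fun z v _ ↦ ?_) (fun v hv hmem ↦ ?_) (mem_words.mpr rfl)
  · rw [← sum_words_add, sum_orbitMass]
  · rw [← sum_words_smul (sec (φ z) v)]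
    exact Finset.sum_congr rfl fun u _ ↦ by rw [← smul_append, orbitMass_smul]
  · refine Finset.sum_eq_zero fun u _ ↦ if_neg fun h ↦ hmem ?_
    exact mem_words.mp hv ▸ mem_orbitPrefixes_of_append h

theorem isAtomlessMass_orbitMass (hinf : (Set.range fun z ↦ φ z • w).Infinite) :
    IsAtomlessMass (orbitMass φ w) where
  nonneg v := by
    unfold orbitMass
    positivity
  sum_append := sum_orbitMass_append
  exists_forall_le {ε} hε := by
    obtain ⟨K, hK⟩ := exists_nat_gt ε⁻¹
    obtain ⟨N, hN⟩ := eventually_atTop.mp (eventually_le_card_orbitPrefixes hinf K)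
    refine ⟨N, fun v hv ↦ ?_⟩
    rw [orbitMass]
    split_ifs
    · exact inv_le_of_inv_le₀ hε (hK.le.trans (by exact_mod_cast hN _ hv))
    · exact hε.le

theorem nontrivMass_orbitMass [DecidableEq (treeAut X)] (g : treeAut X) :
    nontrivMass (orbitMass φ w) g n =
      1 - ((orbitPrefixes φ w n).filter fun v ↦ sec g v = 1).card / (orbitPrefixes φ w n).card := by
  rw [← sum_filter_words_orbitMass, eq_sub_iff_add_eq', ← sum_orbitMass (φ := φ) (w := w) n,
    ← Finset.sum_filter_add_sum_filter_not (words X n) fun v ↦ sec g v = 1, nontrivMass]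
  congr!

end OrbitMass

section FreeOrbit

open Filter Topology Stream'

variable {X : Type*} [Finite X] [Nonempty X]

/-- The edges `v → φ (of i) • v` with trivial section at `v` lift to edges of the Cayley graph of
the free group: each word `v` is continued to a point of the orbit in a way that is constant along
these edges. -/
theorem sum_card_sec_eq_one_le {α : Type*} [Fintype α] [DecidableEq (treeAut X)]
    {φ : FreeGroup α →* treeAut X} {w : Stream' X} (hw : Function.Injective fun z ↦ φ z • w)
    (n : ℕ) :
    ∑ i, ((orbitPrefixes φ w n).filter fun v ↦ sec (φ (.of i)) v = 1).card ≤
      (orbitPrefixes φ w n).card := by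
  have : Nonempty (Stream' X) := ⟨w⟩
  let tails (v : List X) : Set (Stream' X) := {t | ∃ z, φ z • w = v ++ₛ t}
  have htails {i : α} {v : List X} (h : sec (φ (.of i)) v = 1) :
      tails (φ (.of i) • v) = tails v := by
    ext t
    have hsmul : φ (.of i) • (v ++ₛ t) = (φ (.of i) • v) ++ₛ t := by
      rw [smul_append_stream, h, one_smul]
    constructor
    · rintro ⟨z, hz⟩
      exact ⟨(.of i)⁻¹ * z, by
        rw [map_mul, map_inv, mul_smul, hz, inv_smul_eq_iff, hsmul]⟩
    · rintro ⟨z, hz⟩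
      exact ⟨.of i * z, by rw [map_mul, mul_smul, hz, hsmul]⟩
  let tail (v : List X) : Stream' X := Classical.epsilon (· ∈ tails v)
  let lift (v : List X) : FreeGroup α := Classical.epsilon fun z ↦ φ z • w = v ++ₛ tail v
  have hlift {v : List X} (hv : v ∈ orbitPrefixes φ w n) : φ (lift v) • w = v ++ₛ tail v := by
    obtain ⟨z, rfl⟩ := mem_orbitPrefixes.mp hv
    have htail : tail ((φ z • w).take n) ∈ tails ((φ z • w).take n) :=
      Classical.epsilon_spec (p := (· ∈ tails ((φ z • w).take n)))
        ⟨(φ z • w).drop n, z, (append_take_drop _ _).symm⟩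
    exact Classical.epsilon_spec htail
  refine sum_card_le_card_of_free _ _ (fun i ↦ MulAction.toPerm (φ (.of i))) lift fun i v hv ↦ ?_
  obtain ⟨hmem, hsec⟩ := Finset.mem_filter.mp hv
  have hmem' := (smul_mem_orbitPrefixes_iff (φ := φ) (.of i)).mpr hmem
  refine ⟨hmem, hmem', hw ?_⟩
  calc φ (lift (φ (.of i) • v)) • w = (φ (.of i) • v) ++ₛ tail v := by
        simp only [hlift hmem', tail, htails hsec]
    _ = φ (.of i * lift v) • w := by
        rw [map_mul, mul_smul, hlift hmem, smul_append_stream, hsec, one_smul]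

theorem card_le_one_of_injective_smul {α : Type*} [Fintype α] [Nonempty α] {e : ℕ}
    {φ : FreeGroup α →* treeAut X} (hφ : ∀ i, φ (.of i) ∈ polyGrowth X e) {w : Stream' X}
    (hw : Function.Injective fun z ↦ φ z • w) : Fintype.card α ≤ 1 := by
  classical
  have hμ := isAtomlessMass_orbitMass (Set.infinite_range_of_injective hw)
  have hlim : Tendsto (fun n ↦ ∑ i, (1 - nontrivMass (orbitMass φ w) (φ (.of i)) n)) atTop
      (𝓝 (∑ _i : α, (1 - 0))) :=
    tendsto_finsetSum _ fun i _ ↦ tendsto_const_nhds.sub (tendsto_nontrivMass (hφ i) hμ)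
  have hle (n : ℕ) : ∑ i, (1 - nontrivMass (orbitMass φ w) (φ (.of i)) n) ≤ 1 := by
    have hpos : (0 : ℝ) < (orbitPrefixes φ w n).card := by exact_mod_cast card_orbitPrefixes_pos
    simp only [nontrivMass_orbitMass, sub_sub_cancel]
    rw [← Finset.sum_div, div_le_one hpos]
    exact_mod_cast sum_card_sec_eq_one_le hw n
  simpa using le_of_tendsto' hlim hle

end FreeOrbit

section FixedPoint

open Filter Stream'

variable {X G : Type*} [Nonempty X] [Group G]

theorem exists_lt_forall_sec_take_eq [Group.FG G] {φ : G →* treeAut X}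
    (hφ : ∀ z, φ z ∈ finiteState X) {w : Stream' X} (hw : ∀ z, φ z • w = w) :
    ∃ m n, m < n ∧ ∀ z, sec (φ z) (w.take m) = sec (φ z) (w.take n) := by
  obtain ⟨S, hS⟩ := Group.fg_def.mp ‹Group.FG G›
  have hfin : {f : S → treeAut X | ∀ s : S, f s ∈ Set.range (sec (φ s))}.Finite :=
    Set.Finite.pi' fun s : S ↦ hφ s
  have hmem (n : ℕ) : (fun s : S ↦ sec (φ s) (w.take n)) ∈
      {f : S → treeAut X | ∀ s : S, f s ∈ Set.range (sec (φ s))} := fun s ↦ ⟨_, rfl⟩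
  obtain ⟨m, n, hmn, heq⟩ := hfin.exists_lt_map_eq_of_forall_mem hmem
  have hfix (n : ℕ) (z : G) : φ z • w.take n = w.take n := by rw [smul_take, hw]
  have hhom : secHom φ (w.take m) (hfix m) = secHom φ (w.take n) (hfix n) :=
    MonoidHom.eq_of_eqOn_dense hS fun s hs ↦ congrFun heq ⟨s, hs⟩
  exact ⟨m, n, hmn, DFunLike.congr_fun hhom⟩

variable [Finite X]

theorem isOfFinOrder_of_mem_finitary {g : treeAut X} (hg : g ∈ finitary X) : IsOfFinOrder g := by
  obtain ⟨n, hn⟩ := hg.exists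
  have hpow (k : ℕ) : secCount ⊥ (g ^ k) n = 0 := by
    induction k with
    | zero => rw [pow_zero, secCount_one]
    | succ k ih => simpa [ih, hn, pow_succ] using secCount_mul_le ⊥ (g ^ k) g n
  obtain ⟨k, hk, -, hmem⟩ := (levelStab X n).exists_pow_mem_of_index_ne_zero
    Subgroup.FiniteIndex.index_ne_zero g
  refine isOfFinOrder_iff_pow_eq_one.mpr ⟨k, hk, eq_one_of_forall_mem_coneStab n fun v hv ↦ ?_⟩
  rw [mem_coneStab_iff_sec_eq_one (mem_levelStab.mp hmem v hv)]
  exact secCount_eq_zero.mp (hpow k) v (mem_words.mpr hv)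

theorem exists_not_commute_smul_eq_self [IsFreeGroup G] (hG : ∃ a b : G, ¬ Commute a b) {e : ℕ}
    {φ : G →* treeAut X} (hφ : ∀ z, φ z ∈ polyGrowth X e) (w : Stream' X) :
    ∃ a b, ¬ Commute a b ∧ φ a • w = w ∧ φ b • w = w := by
  obtain ⟨a, ha, b, hb, hab⟩ := exists_not_commute_of_forall_injective hG
    ((MulAction.stabilizer (treeAut X) w).comap φ) fun ψ _ ↦ by
      by_contra! hcon
      suffices hinj : Function.Injective fun z ↦ φ.comp ψ z • w by
        simpa using card_le_one_of_injective_smul (fun i ↦ hφ (ψ (.of i))) hinj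
      intro z z' heq
      refine inv_mul_eq_one.mp (by_contra fun hne ↦ hcon _ hne ?_)
      rw [Subgroup.mem_comap, MulAction.mem_stabilizer_iff, ← MonoidHom.comp_apply, map_mul,
        map_inv, mul_smul, inv_smul_eq_iff]
      exact heq.symm
  exact ⟨a, b, hab, ha, hb⟩

/-- Sections along a fixed point recur, by finiteness of the set of states. -/
theorem exists_injective_sec_eq_self [Group.FG G] {φ : G →* treeAut X} {e : ℕ}
    (hφ : ∀ z, φ z ∈ finiteState X ⊓ polyGrowth X e) {w : Stream' X} (hw : ∀ z, φ z • w = w)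
    (hgerm : ∀ n z, φ z ∈ coneStab (w.take n) → z = 1) :
    ∃ (ρ : G →* treeAut X) (u : List X), Function.Injective ρ ∧
      (∀ z, ρ z ∈ finiteState X ⊓ polyGrowth X e) ∧ u ≠ [] ∧ (∀ z, ρ z • u = u) ∧
      ∀ z, sec (ρ z) u = ρ z := by
  obtain ⟨m, n, hmn, heq⟩ := exists_lt_forall_sec_take_eq (fun z ↦ (hφ z).1) hw
  obtain ⟨k, rfl⟩ := Nat.exists_eq_add_of_le hmn.le
  have hfix (n : ℕ) (z : G) : φ z • w.take n = w.take n := by rw [smul_take, hw]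
  have happ : w.take m ++ (w.drop m).take k = w.take (m + k) := (take_add _ _ _).symm
  refine ⟨secHom φ (w.take m) (hfix m), (w.drop m).take k, ?_, fun z ↦ ?_, fun hnil ↦ ?_,
    fun z ↦ ?_, fun z ↦ ?_⟩
  · refine (injective_iff_map_eq_one _).mpr fun z hz ↦ hgerm m z ?_
    exact (mem_coneStab_iff_sec_eq_one (hfix m z)).mpr hz
  · exact ⟨sec_mem_finiteState (hφ z).1 _, sec_mem_polyGrowth (hφ z).2 _⟩
  · have hlen := congrArg List.length hnil
    simp only [length_take, List.length_nil] at hlen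
    omega
  · have := hfix (m + k) z
    rw [← happ, smul_append, hfix] at this
    exact List.append_cancel_left this
  · exact (sec_append _ _ _).symm.trans (happ ▸ (heq z).symm)

theorem not_injective_of_forall_exists_mem_coneStab [IsFreeGroup G] [Nontrivial G]
    {ρ : G →* treeAut X} {u : List X} (hne : u ≠ []) (hu : ∀ z, ρ z • u = u)
    (hsec : ∀ z, sec (ρ z) u = ρ z)
    (h : ∀ v : List X, v.length = u.length → v ≠ u → ∃ z ≠ 1, ρ z ∈ coneStab v) :
    ¬ Function.Injective ρ := by
  classical
  intro hρ
  obtain ⟨z, hz, hcone⟩ := exists_ne_one_forall_mem_coneStab ρ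
    (Finset.erase_subset u (words X u.length)) fun v hv ↦
      h v (mem_words.mp (Finset.mem_of_mem_erase hv)) (Finset.ne_of_mem_erase hv)
  refine hz (hρ ((eq_one_of_sec_eq_self hne (hu z) (hsec z) fun v hv hvu ↦ ?_).trans
    (map_one ρ).symm))
  exact hcone v (Finset.mem_erase.mpr ⟨hvu, mem_words.mpr hv⟩)

theorem exists_subgroup_injective_sec_eq_self [IsFreeGroup G] (hG : ∃ a b : G, ¬ Commute a b)
    {e : ℕ} {φ : G →* treeAut X} (hφ : ∀ z, φ z ∈ finiteState X ⊓ polyGrowth X e)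
    (hinj : Function.Injective φ) :
    ∃ (K : Subgroup G) (ρ : K →* treeAut X) (u : List X), (∃ a b : K, ¬ Commute a b) ∧
      Function.Injective ρ ∧ (∀ z, ρ z ∈ finiteState X ⊓ polyGrowth X e) ∧ u ≠ [] ∧
      (∀ z, ρ z • u = u) ∧ ∀ z, sec (ρ z) u = ρ z := by
  have := nontrivial_of_not_commute hG
  obtain ⟨w, hw⟩ := exists_forall_eq_one_of_mem_coneStab hinj
  obtain ⟨a, b, hab, ha, hb⟩ := exists_not_commute_smul_eq_self hG (fun z ↦ (hφ z).2) w
  let K := Subgroup.closure {a, b}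
  have hle : K ≤ (MulAction.stabilizer (treeAut X) w).comap φ := by
    simp [K, Subgroup.closure_le, Set.pair_subset_iff, ha, hb]
  obtain ⟨ρ, u, hρ⟩ := exists_injective_sec_eq_self (φ := φ.comp K.subtype) (fun z ↦ hφ z)
    (fun z ↦ hle z.2) fun n z hz ↦ Subtype.ext (hw n z hz)
  refine ⟨K, ρ, u, ⟨⟨a, ?_⟩, ⟨b, ?_⟩, fun h ↦ hab (h.map K.subtype)⟩, hρ⟩
  · exact Subgroup.subset_closure (Set.mem_insert a {b})
  · exact Subgroup.subset_closure (Set.mem_insert_of_mem a rfl)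

theorem not_injective_of_forall_mem_polyGrowth [IsFreeGroup G] (hG : ∃ a b : G, ¬ Commute a b)
    {e : ℕ} {φ : G →* treeAut X} (hφ : ∀ z, φ z ∈ finiteState X ⊓ polyGrowth X e) :
    ¬ Function.Injective φ := by
  intro hinj
  induction e generalizing G with
  | zero =>
    have := nontrivial_of_not_commute hG
    obtain ⟨z, hz⟩ := exists_ne (1 : G)
    exact hz (hinj.isOfFinOrder_iff.mp (isOfFinOrder_of_mem_finitary (hφ z).2)).eq_one'
  | succ e ih =>
    obtain ⟨K, ρ, u, hK, hρ, hmem, hne, hu, hsec⟩ :=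
      exists_subgroup_injective_sec_eq_self hG hφ hinj
    have := nontrivial_of_not_commute hK
    refine not_injective_of_forall_exists_mem_coneStab hne hu hsec (fun v hv hvu ↦ ?_) hρ
    let N := (levelStab X u.length).comap ρ
    have hvN (z : N) : ρ z • v = v := mem_levelStab.mp z.2 v hv
    have hker := ih (exists_not_commute_of_finiteIndex hK N)
      (φ := secHom (ρ.comp N.subtype) v hvN) fun z ↦ ⟨sec_mem_finiteState (hmem z).1 v,
        sec_mem_polyGrowth_of_sec_eq_self (hmem z).2 (hsec z) hv hvu⟩
    obtain ⟨z, hz, hz1⟩ := not_forall₂.mp (mt (injective_iff_map_eq_one _).mpr hker)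
    exact ⟨z, fun h ↦ hz1 (Subtype.ext h), (mem_coneStab_iff_sec_eq_one (hvN z)).mpr hz⟩

theorem exists_forall_mem_finiteState_inf_polyGrowth [Group.FG G] {φ : G →* treeAut X}
    (hφ : ∀ z, ∃ e, φ z ∈ finiteState X ⊓ polyGrowth X e) :
    ∃ e, ∀ z, φ z ∈ finiteState X ⊓ polyGrowth X e := by
  obtain ⟨S, hS⟩ := Group.fg_def.mp ‹Group.FG G›
  choose e he using hφ
  refine ⟨S.sup e, fun z ↦ ?_⟩
  suffices h : Subgroup.closure S ≤ (finiteState X ⊓ polyGrowth X (S.sup e)).comap φ from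
    h (hS ▸ Subgroup.mem_top z)
  exact (Subgroup.closure_le _).mpr fun s hs ↦
    ⟨(he s).1, polyGrowth_mono (Finset.le_sup hs) (he s).2⟩

end FixedPoint

end treeAut

/-- **Theorem `th:sidki`.** For every finite set `X` and every `d ≥ -1` the
group `P_d(X)` contains no free non-abelian subgroup: there is no injective homomorphism
from the free group of rank 2 whose image lies in `P_d(X)`. -/
theorem stmt_14 (X : Type*) [Fintype X] [Nonempty X] (d : ℤ) (hd : -1 ≤ d)
    (φ : FreeGroup (Fin 2) →* Equiv.Perm (ℕ → X)) (hφ : ∀ z, MemP d (φ z)) :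
    ¬ Function.Injective φ := by
  let Φ : FreeGroup (Fin 2) →* treeAut X := φ.codRestrict (treeAut X) fun z ↦ (hφ z).1
  obtain ⟨e, he⟩ := treeAut.exists_forall_mem_finiteState_inf_polyGrowth (φ := Φ) fun z ↦
    treeAut.exists_mem_finiteState_inf_polyGrowth_of_memP (hφ z)
  have hnoncomm : ∃ a b : FreeGroup (Fin 2), ¬ Commute a b :=
    ⟨.of 0, .of 1, fun h ↦ absurd h.eq (by decide)⟩
  exact fun hinj ↦ treeAut.not_injective_of_forall_mem_polyGrowth hnoncomm he
    fun _ _ h ↦ hinj (congrArg Subtype.val h)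
end

section
/- Let a and b be the automorphisms of the binary rooted tree {0,1}^* defined recursively by a(0v) = 1v, a(1v) = 0·a(v), b(0v) = 0·b(v), b(1v) = 1·a(v) for all v ∈ {0,1}^*. Then a ∈ P_0({0,1}), b ∈ P_1({0,1}), and the group G = ⟨a, b⟩ contains no free non-abelian subgroup. -/
/-- Prepend a letter to an infinite sequence:  `scons x v = x·v`. -/
def scons {X : Type*} (x : X) (v : ℕ → X) : ℕ → X :=
  fun i => Nat.casesOn i x v

/-!
Identify `{0,1}^ω` with the 2-adic integers. Then `a` is the odometer `x ↦ x + 1`, which acts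
freely, `b` fixes `0`, and on the words beginning with `0^l 1` it is `a ^ 2 ^ (l + 1)`. Hence off
`0` the germs of `b` are germs of powers of `a`, the germs at a point `w` of the elements of
`⟨a, b⟩` fixing `w` are powers of a single germ, and any two such elements commute near `w`.

The Schreier graphs of `⟨a, b⟩` grow subexponentially: deleting the first letter shortens a path
by about half the number of its `a`-edges, and paths with few `a`-edges have few end points. In a
free subgroup a commutative point stabilizer would be cyclic, and the `2 ^ n` positive words of
length `n` would move the point to at least `2 ^ n / (4 * n + 1)` points. So the stabilizer of
every point contains two elements that do not commute, and their commutator is a nontrivial element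
that fixes a neighbourhood of the point.

If nontrivial elements of a free group fix two sibling cylinders pointwise, then some nontrivial
element fixes both. For the two pointwise stabilizers normalize each other; if they met trivially,
they would commute with each other and hence be cyclic, and a power of each free generator, which
preserves both cylinders, would commute with them. By compactness of `{0,1}^ω`, climbing up the tree
yields a nontrivial element that fixes everything.
-/

section TorsionFree

variable {G : Type*} [Group G] [IsMulTorsionFree G] {g h c t : G}

theorem commute_of_commute_pow {n : ℕ} (hn : n ≠ 0) (hgt : Commute g (t ^ n)) : Commute g t := by
  have hconj : (g * t * g⁻¹) ^ n = t ^ n := by rw [conj_pow, hgt.eq, mul_inv_cancel_right]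
  exact mul_inv_eq_iff_eq_mul.1 (pow_left_injective hn hconj)

theorem commute_of_conj_mem_zpowers (hh : h * c * h⁻¹ ∈ Subgroup.zpowers c)
    (hh' : h⁻¹ * c * h ∈ Subgroup.zpowers c) : Commute h c := by
  rcases eq_or_ne c 1 with rfl | hc
  · exact Commute.one_right h
  obtain ⟨k, hk : c ^ k = _⟩ := hh
  obtain ⟨l, hl : c ^ l = _⟩ := hh'
  have hkl : k * l = 1 := by
    have hpow : c ^ (k * l - 1) = 1 := by
      rw [zpow_sub_one, zpow_mul, hk, conj_zpow, hl]
      group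
    exact sub_eq_zero.1 ((IsMulTorsionFree.zpow_eq_one_iff_right hc).1 hpow)
  have hkk : k * k = 1 := by
    rcases Int.eq_one_or_neg_one_of_mul_eq_one hkl with rfl | rfl <;> norm_num
  have hsq : h ^ 2 * c * (h ^ 2)⁻¹ = c :=
    calc h ^ 2 * c * (h ^ 2)⁻¹ = h * (h * c * h⁻¹) * h⁻¹ := by
          simp only [sq, mul_inv_rev, mul_assoc]
      _ = c ^ (k * k) := by rw [← hk, ← conj_zpow, ← hk, zpow_mul]
      _ = c := by rw [hkk, zpow_one]
  exact (commute_of_commute_pow two_ne_zero (mul_inv_eq_iff_eq_mul.1 hsq).symm).symm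

end TorsionFree

section FreeGroups

theorem eq_one_of_forall_commute_of {ι : Type*} [Nontrivial ι] {z : FreeGroup ι}
    (hz : ∀ i, Commute z (FreeGroup.of i)) : z = 1 := by
  classical
  by_contra hne
  have hword : z.toWord ≠ [] := by rwa [ne_eq, FreeGroup.toWord_eq_nil_iff]
  have hred : FreeGroup.IsReduced z.toWord := FreeGroup.isReduced_toWord
  obtain ⟨⟨i, β⟩, L, hhead⟩ := List.exists_cons_of_ne_nil hword
  obtain ⟨L', ⟨l, γ⟩, hlast⟩ : ∃ L' q, z.toWord = L' ++ [q] :=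
    ⟨_, _, (List.dropLast_append_getLast hword).symm⟩
  obtain ⟨j, hji⟩ := exists_ne i
  -- The sign `γ` prevents cancellation of the letter `j` at the end of `z`.
  have hcomm : FreeGroup.mk ((j, γ) :: z.toWord) = FreeGroup.mk (z.toWord ++ [(j, γ)]) := by
    have hletter : Commute z (FreeGroup.mk [(j, γ)]) := by
      cases γ
      · exact (hz j).inv_right
      · exact hz j
    rw [← List.singleton_append, ← FreeGroup.mul_mk, ← FreeGroup.mul_mk, FreeGroup.mk_toWord]
    exact hletter.eq.symm
  have hfront : FreeGroup.IsReduced ((j, γ) :: z.toWord) := by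
    rw [hhead] at hred ⊢
    exact FreeGroup.isReduced_cons_cons.2 ⟨fun h => absurd h hji, hred⟩
  have hback : FreeGroup.IsReduced (z.toWord ++ [(j, γ)]) := by
    rw [hlast] at hred ⊢
    exact hred.append_overlap (FreeGroup.isReduced_cons_cons.2 ⟨fun _ => rfl, .singleton⟩)
      (List.cons_ne_nil _ _)
  have hwords := FreeGroup.reduce.sound hcomm
  rw [hfront.reduce_eq, hback.reduce_eq, hhead, List.cons_append, List.cons.injEq] at hwords
  exact hji (congrArg Prod.fst hwords.1)

theorem isCyclic_of_forall_commute {A : Type*} [Group A] [IsFreeGroup A] {z : A} (hz : z ≠ 1)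
    (hcomm : ∀ x, Commute z x) : IsCyclic A := by
  let e := IsFreeGroup.toFreeGroup A
  rcases subsingleton_or_nontrivial (IsFreeGroup.Generators A) with _ | _
  · rcases isEmpty_or_nonempty (IsFreeGroup.Generators A) with _ | ⟨⟨i⟩⟩
    · exact absurd (e.injective (Subsingleton.elim _ _)) hz
    · let _ : Unique (IsFreeGroup.Generators A) := ⟨⟨i⟩, fun _ => Subsingleton.elim _ _⟩
      exact isCyclic_of_surjective e.symm e.symm.surjective
  · have hez : e z = 1 := eq_one_of_forall_commute_of fun i => by
      simpa only [MulEquiv.apply_symm_apply] using (hcomm (e.symm (FreeGroup.of i))).map e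
    exact absurd ((map_eq_one_iff e e.injective).1 hez) hz

theorem isCyclic_of_isMulCommutative (A : Type*) [Group A] [IsFreeGroup A] [IsMulCommutative A] :
    IsCyclic A := by
  rcases subsingleton_or_nontrivial A with _ | _
  · infer_instance
  · obtain ⟨z, hz⟩ := exists_ne (1 : A)
    exact isCyclic_of_forall_commute hz fun x => mul_comm' z x

variable {α : Type*} {g h x y z : FreeGroup α}

theorem exists_zpowers_eq_centralizer (hg : g ≠ 1) :
    ∃ c, Subgroup.zpowers c = Subgroup.centralizer {g} := by
  rw [← Subgroup.isCyclic_iff_exists_zpowers_eq_top]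
  refine isCyclic_of_forall_commute (z := ⟨g, Subgroup.mem_centralizer_singleton_iff.2 rfl⟩)
    (fun h => hg (congrArg Subtype.val h)) fun ⟨x, hx⟩ => ?_
  exact Subtype.ext (Subgroup.mem_centralizer_singleton_iff.1 hx).symm

theorem commute_of_commute_of_ne_one (hy : y ≠ 1) (hxy : Commute x y) (hyz : Commute y z) :
    Commute x z := by
  obtain ⟨c, hc⟩ := exists_zpowers_eq_centralizer hy
  obtain ⟨k, rfl⟩ : x ∈ Subgroup.zpowers c := hc ▸ Subgroup.mem_centralizer_singleton_iff.2 hxy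
  obtain ⟨l, rfl⟩ : z ∈ Subgroup.zpowers c := hc ▸ Subgroup.mem_centralizer_singleton_iff.2 hyz.symm
  exact Commute.zpow_zpow_self c k l

-- The hypothesis makes `h` normalize the centralizer of `g`, which is infinite cyclic.
theorem commute_of_commute_conj (hgh : Commute g (h * g * h⁻¹)) : Commute g h := by
  rcases eq_or_ne g 1 with rfl | hg
  · exact Commute.one_left h
  obtain ⟨c, hc⟩ := exists_zpowers_eq_centralizer hg
  have hmem {x : FreeGroup α} : x ∈ Subgroup.zpowers c ↔ Commute x g := by
    rw [hc, Subgroup.mem_centralizer_singleton_iff]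
    rfl
  have hcg : Commute c g := hmem.1 (Subgroup.mem_zpowers c)
  have hconj : h * g * h⁻¹ ≠ 1 := mt conj_eq_one_iff.1 hg
  have hgh' : Commute (h⁻¹ * g * h) g := by
    simpa [mul_assoc] using ((Commute.conj_iff h⁻¹).2 hgh)
  have hconj' : h⁻¹ * g * h ≠ 1 := by simpa using mt (conj_eq_one_iff (a := h⁻¹)).1 hg
  have hhc : Commute h c := by
    refine commute_of_conj_mem_zpowers (hmem.2 ?_) (hmem.2 ?_)
    · exact commute_of_commute_of_ne_one hconj ((Commute.conj_iff h).2 hcg) hgh.symm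
    · refine commute_of_commute_of_ne_one hconj' ?_ hgh'
      simpa using (Commute.conj_iff h⁻¹).2 hcg
  obtain ⟨k, rfl⟩ := hmem.2 (Commute.refl g)
  exact (hhc.zpow_right k).symm

theorem inf_ne_bot_of_le_normalizer {ι : Type*} [Nontrivial ι] {K₀ K₁ : Subgroup (FreeGroup ι)}
    (hK₀ : K₀ ≠ ⊥) (hK₁ : K₁ ≠ ⊥) (h₀₁ : K₀ ≤ Subgroup.normalizer K₁)
    (h₁₀ : K₁ ≤ Subgroup.normalizer K₀)
    (hpow : ∀ i, ∃ n ≠ 0, FreeGroup.of i ^ n ∈ Subgroup.normalizer (K₀ : Set (FreeGroup ι))) :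
    K₀ ⊓ K₁ ≠ ⊥ := by
  intro hbot
  obtain ⟨⟨g₀, hg₀⟩, hne₀⟩ := Subgroup.ne_bot_iff_exists_ne_one.1 hK₀
  obtain ⟨⟨g₁, hg₁⟩, hne₁⟩ := Subgroup.ne_bot_iff_exists_ne_one.1 hK₁
  replace hne₀ : g₀ ≠ 1 := fun h => hne₀ (Subtype.ext h)
  replace hne₁ : g₁ ≠ 1 := fun h => hne₁ (Subtype.ext h)
  have hcross : ∀ k ∈ K₀, Commute k g₁ := by
    intro k hk
    rw [← commutatorElement_eq_one_iff_commute, ← Subgroup.mem_bot, ← hbot]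
    refine ⟨?_, K₁.mul_mem ((Subgroup.mem_normalizer_iff.1 (h₀₁ hk) g₁).1 hg₁) (inv_mem hg₁)⟩
    rw [SetLike.mem_coe, commutatorElement_def, mul_assoc, mul_assoc, ← mul_assoc g₁]
    exact K₀.mul_mem hk ((Subgroup.mem_normalizer_iff.1 (h₁₀ hg₁) k⁻¹).1 (inv_mem hk))
  have hcomm : ∀ k ∈ K₀, Commute g₀ k := fun k hk =>
    commute_of_commute_of_ne_one hne₁ (hcross g₀ hg₀) (hcross k hk).symm
  refine hne₀ (eq_one_of_forall_commute_of fun i => ?_)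
  obtain ⟨n, hn, hnorm⟩ := hpow i
  exact commute_of_commute_pow hn <| commute_of_commute_conj <|
    hcomm _ ((Subgroup.mem_normalizer_iff.1 hnorm g₀).1 hg₀)

end FreeGroups

section CountingWords

variable {α : Type*}

section Norm

variable [DecidableEq α]

theorem le_norm_pow {c : FreeGroup α} (hc : c ≠ 1) (n : ℕ) : n ≤ (c ^ n).norm := by
  have hcore : FreeGroup.reduceCyclically c.toWord ≠ [] := by
    intro hnil
    have hconj := FreeGroup.reduceCyclically.conj_conjugator_reduceCyclically c.toWord
    refine hc ?_
    rw [← FreeGroup.mk_toWord (x := c), ← hconj, hnil, List.append_nil, ← FreeGroup.mul_mk,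
      ← FreeGroup.inv_mk, mul_inv_cancel]
  have hlen : n ≤ n * (FreeGroup.reduceCyclically c.toWord).length :=
    Nat.le_mul_of_pos_right n (List.length_pos_iff.2 hcore)
  rw [FreeGroup.norm, FreeGroup.toWord_pow,
    FreeGroup.reduceCyclically.reduce_flatten_replicate FreeGroup.isReduced_toWord]
  split_ifs with hn
  · exact hn.le
  · simp only [List.length_append, List.length_flatten, List.map_replicate, List.sum_replicate,
      smul_eq_mul]
    omega

theorem natAbs_le_norm_zpow {c : FreeGroup α} (hc : c ≠ 1) (k : ℤ) :
    k.natAbs ≤ (c ^ k).norm := by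
  rcases Int.natAbs_eq k with hk | hk
  · conv_rhs => rw [hk, zpow_natCast]
    exact le_norm_pow hc _
  · conv_rhs => rw [hk, zpow_neg, zpow_natCast, FreeGroup.norm_inv_eq]
    exact le_norm_pow hc _

theorem card_le_of_subset_zpowers (c : FreeGroup α) {T : Finset (FreeGroup α)} {n : ℕ}
    (hT : ∀ x ∈ T, x ∈ Subgroup.zpowers c) (hnorm : ∀ x ∈ T, x.norm ≤ n) :
    T.card ≤ 2 * n + 1 := by
  rcases eq_or_ne c 1 with rfl | hc
  · have hone : T.card ≤ 1 := Finset.card_le_one.2 fun x hx y hy => by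
      simp only [Subgroup.zpowers_one_eq_bot, Subgroup.mem_bot] at hT
      rw [hT x hx, hT y hy]
    omega
  · have hsub : T ⊆ (Finset.Icc (-n : ℤ) n).image (c ^ ·) := fun x hx => by
      obtain ⟨k, rfl⟩ := hT x hx
      have hk := (natAbs_le_norm_zpow hc k).trans (hnorm _ hx)
      exact Finset.mem_image.2 ⟨k, Finset.mem_Icc.2 (by omega), rfl⟩
    refine (Finset.card_le_card hsub).trans (Finset.card_image_le.trans ?_)
    rw [Int.card_Icc]
    omega

theorem card_le_of_inv_mul_mem (H : Subgroup (FreeGroup α)) [IsMulCommutative H]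
    {T : Finset (FreeGroup α)} {n : ℕ} (hT : ∀ x ∈ T, ∀ y ∈ T, x⁻¹ * y ∈ H)
    (hnorm : ∀ x ∈ T, x.norm ≤ n) : T.card ≤ 4 * n + 1 := by
  rcases T.eq_empty_or_nonempty with rfl | ⟨x, hx⟩
  · exact Nat.zero_le _
  obtain ⟨c, hc⟩ :=
    (Subgroup.isCyclic_iff_exists_zpowers_eq_top H).1 (isCyclic_of_isMulCommutative H)
  have hcard := card_le_of_subset_zpowers c (T := T.image (x⁻¹ * ·)) (n := 2 * n)
    (Finset.forall_mem_image.2 fun y hy => hc ▸ hT x hx y hy)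
    (Finset.forall_mem_image.2 fun y hy => ?_)
  · rw [Finset.card_image_of_injective _ (mul_right_injective x⁻¹)] at hcard
    omega
  · have hmul := FreeGroup.norm_mul_le x⁻¹ y
    rw [FreeGroup.norm_inv_eq] at hmul
    linarith [hnorm x hx, hnorm y hy]

theorem card_le_mul_card_image_apply {Y : Type*} [DecidableEq Y]
    (φ : FreeGroup α →* Equiv.Perm Y) (y : Y)
    [IsMulCommutative ((MulAction.stabilizer (Equiv.Perm Y) y).comap φ)]
    {T : Finset (FreeGroup α)} {n : ℕ} (hnorm : ∀ x ∈ T, x.norm ≤ n) :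
    T.card ≤ (4 * n + 1) * (T.image (φ · y)).card := by
  refine Finset.card_le_mul_card_image T _ fun z _ =>
    card_le_of_inv_mul_mem ((MulAction.stabilizer (Equiv.Perm Y) y).comap φ)
      (fun g hg h hh => ?_) fun g hg => hnorm g (Finset.mem_filter.1 hg).1
  rw [Subgroup.mem_comap, MulAction.mem_stabilizer_iff, Equiv.Perm.smul_def, map_mul, map_inv,
    Equiv.Perm.mul_apply, Equiv.Perm.inv_eq_iff_eq, (Finset.mem_filter.1 hg).2,
    (Finset.mem_filter.1 hh).2]

end Norm

/-- The element of the free group spelled by a word in the generators, without inverses. -/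
def positiveWord (l : List α) : FreeGroup α := FreeGroup.mk (l.map fun i => (i, true))

theorem positiveWord_nil : positiveWord ([] : List α) = 1 := rfl

theorem positiveWord_cons (i : α) (l : List α) :
    positiveWord (i :: l) = FreeGroup.of i * positiveWord l := rfl

theorem norm_positiveWord_le [DecidableEq α] (l : List α) : (positiveWord l).norm ≤ l.length :=
  FreeGroup.norm_mk_le.trans (List.length_map _).le

theorem positiveWord_injective : Function.Injective (positiveWord (α := α)) := by
  classical
  have hred (l : List α) : FreeGroup.IsReduced (l.map fun i => (i, true)) :=
    List.Pairwise.isChain (List.pairwise_map.2 (List.pairwise_of_forall fun _ _ _ => rfl))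
  intro l l' hll'
  have hwords := congrArg FreeGroup.toWord hll'
  rw [positiveWord, positiveWord, FreeGroup.toWord_mk, FreeGroup.toWord_mk, (hred l).reduce_eq,
    (hred l').reduce_eq] at hwords
  exact List.map_injective_iff.2 (fun _ _ hij => congrArg Prod.fst hij) hwords

theorem card_pow_le_of_forall_positiveWord_mem [Fintype α] {Y : Type*}
    (φ : FreeGroup α →* Equiv.Perm Y) (y : Y)
    [IsMulCommutative ((MulAction.stabilizer (Equiv.Perm Y) y).comap φ)] {n : ℕ} {B : Set Y}
    (hB : ∀ l : List α, l.length = n → φ (positiveWord l) y ∈ B) :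
    ((Fintype.card α ^ n : ℕ) : ℕ∞) ≤ (4 * n + 1 : ℕ) * B.encard := by
  classical
  let word : List.Vector α n → FreeGroup α := fun l => positiveWord l.toList
  have hword : Function.Injective word := positiveWord_injective.comp List.Vector.toList_injective
  let T : Finset (FreeGroup α) := Finset.univ.image word
  have hT : T.card = Fintype.card α ^ n := by
    rw [Finset.card_image_of_injective _ hword, Finset.card_univ, card_vector]
  have hnorm : ∀ x ∈ T, x.norm ≤ n := Finset.forall_mem_image.2 fun l _ =>
    (norm_positiveWord_le _).trans l.toList_length.le
  have hTB : ((T.image (φ · y) : Finset Y) : Set Y) ⊆ B := by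
    rw [Finset.coe_image, Set.image_subset_iff]
    exact Finset.forall_mem_image.2 fun l _ => hB _ l.toList_length
  calc ((Fintype.card α ^ n : ℕ) : ℕ∞) ≤ ((4 * n + 1) * (T.image (φ · y)).card : ℕ) := by
        exact_mod_cast hT ▸ card_le_mul_card_image_apply φ y hnorm
    _ = (4 * n + 1 : ℕ) * ((T.image (φ · y) : Finset Y) : Set Y).encard := by
        rw [Set.encard_coe_eq_coe_finsetCard, Nat.cast_mul]
    _ ≤ (4 * n + 1 : ℕ) * B.encard := by gcongr

end CountingWords

section Fixer

variable {G Y : Type*} [Group G] {φ : G →* Equiv.Perm Y} {C D : Set Y} {g : G}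

/-- The elements of `G` that fix every point of `C`, for an action given by a homomorphism `φ`. -/
def fixer (φ : G →* Equiv.Perm Y) (C : Set Y) : Subgroup G :=
  (fixingSubgroup (Equiv.Perm Y) C).comap φ

theorem mem_fixer : g ∈ fixer φ C ↔ ∀ y ∈ C, φ g y = y :=
  mem_fixingSubgroup_iff _

theorem fixer_antitone (φ : G →* Equiv.Perm Y) : Antitone (fixer φ) :=
  fun _ _ hCD => Subgroup.comap_mono (fixingSubgroup_antitone _ _ hCD)

theorem fixer_union : fixer φ (C ∪ D) = fixer φ C ⊓ fixer φ D := by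
  rw [fixer, fixingSubgroup_union, Subgroup.comap_inf]
  rfl

theorem mem_normalizer_fixer (hg : φ g '' C = C) :
    g ∈ Subgroup.normalizer (fixer φ C : Set G) := by
  rw [Subgroup.mem_normalizer_iff]
  intro h
  simp only [mem_fixer, map_mul, map_inv, Equiv.Perm.mul_apply]
  conv_rhs => rw [← hg]
  simp only [Set.forall_mem_image, Equiv.Perm.inv_def, Equiv.symm_apply_apply,
    Equiv.apply_eq_iff_eq]

theorem fixer_union_ne_bot {ι : Type*} [Nontrivial ι] {φ : FreeGroup ι →* Equiv.Perm Y}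
    (hC : fixer φ C ≠ ⊥) (hD : fixer φ D ≠ ⊥) (hCD : ∀ g ∈ fixer φ C, φ g '' D = D)
    (hDC : ∀ g ∈ fixer φ D, φ g '' C = C)
    (hpow : ∀ i, ∃ n ≠ 0, ⇑(φ (FreeGroup.of i) ^ n) '' C = C) : fixer φ (C ∪ D) ≠ ⊥ := by
  rw [fixer_union]
  refine inf_ne_bot_of_le_normalizer hC hD (fun g hg => mem_normalizer_fixer (hCD g hg))
    (fun g hg => mem_normalizer_fixer (hDC g hg)) fun i => ?_
  obtain ⟨n, hn, hC⟩ := hpow i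
  exact ⟨n, hn, mem_normalizer_fixer (by rwa [map_pow])⟩

end Fixer

section Cylinders

open PiNat Topology

theorem exists_cylinder_subset_of_mem_nhds {X : Type*} [TopologicalSpace X] [DiscreteTopology X]
    {w : ℕ → X} {s : Set (ℕ → X)} (hs : s ∈ 𝓝 w) : ∃ n, cylinder w n ⊆ s := by
  obtain ⟨_, ⟨u, n, rfl⟩, hw, hsub⟩ :=
    (isTopologicalBasis_cylinders fun _ : ℕ => X).mem_nhds_iff.1 hs
  exact ⟨n, mem_cylinder_iff_eq.1 hw ▸ hsub⟩

namespace IsTreeAut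

variable {X : Type*} {f : Equiv.Perm (ℕ → X)} {u w : ℕ → X} {n : ℕ}

theorem apply_mem_cylinder_iff (hf : IsTreeAut f) : f u ∈ cylinder (f w) n ↔ u ∈ cylinder w n :=
  (hf n u w).symm

theorem image_cylinder (hf : IsTreeAut f) (w : ℕ → X) (n : ℕ) :
    f '' cylinder w n = cylinder (f w) n := by
  ext u
  rw [Equiv.image_eq_preimage_symm, Set.mem_preimage, ← hf.apply_mem_cylinder_iff,
    Equiv.apply_symm_apply]

theorem continuous [TopologicalSpace X] [DiscreteTopology X] (hf : IsTreeAut f) :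
    Continuous f := by
  refine continuous_pi fun i => IsLocallyConstant.continuous ?_
  refine (IsLocallyConstant.iff_exists_open _).2 fun w =>
    ⟨cylinder w (i + 1), isOpen_cylinder _ w _, self_mem_cylinder w _, fun u hu => ?_⟩
  exact hf.apply_mem_cylinder_iff.2 hu i i.lt_succ_self

theorem exists_pow_image_cylinder_eq [Finite X] (hf : IsTreeAut f) (w : ℕ → X) (n : ℕ) :
    ∃ m ≠ 0, ⇑(f ^ m) '' cylinder w n = cylinder w n := by
  have hpow (k : ℕ) : IsTreeAut (f ^ k) := (treeAut X).pow_mem hf k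
  obtain ⟨i, j, hij, hw⟩ :=
    Finite.exists_ne_map_eq_of_infinite fun (i : ℕ) (k : Fin n) => (f ^ i) w k
  wlog hlt : i < j generalizing i j
  · exact this j i hij.symm hw.symm (by omega)
  refine ⟨j - i, by omega, ?_⟩
  rw [(hpow _).image_cylinder, ← mem_cylinder_iff_eq, ← (hpow i).apply_mem_cylinder_iff,
    ← Equiv.Perm.mul_apply, ← pow_add, Nat.add_sub_cancel' hlt.le]
  exact fun k hk => (congrFun hw ⟨k, hk⟩).symm

theorem image_cylinder_eq_of_sibling {f : Equiv.Perm (ℕ → Fin 2)} {u v : ℕ → Fin 2}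
    (hf : IsTreeAut f) (huv : v ∈ cylinder u n) (hne : v n ≠ u n) (hu : f u = u) :
    f '' cylinder v (n + 1) = cylinder v (n + 1) := by
  have hfv : f v ∈ cylinder u n := hu ▸ hf.apply_mem_cylinder_iff.2 huv
  have hfvn : f v n ≠ u n := by
    intro heq
    have hmem : f v ∈ cylinder (f u) (n + 1) := by
      rw [hu, mem_cylinder_iff]
      exact fun i hi => (Nat.lt_succ_iff_lt_or_eq.1 hi).elim (hfv i) fun h => h ▸ heq
    exact hne (hf.apply_mem_cylinder_iff.1 hmem n n.lt_succ_self)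
  rw [hf.image_cylinder, ← mem_cylinder_iff_eq, mem_cylinder_iff]
  intro i hi
  rcases Nat.lt_succ_iff_lt_or_eq.1 hi with hi | rfl
  · exact (hfv i hi).trans (huv i hi).symm
  · omega

end IsTreeAut

variable {ι : Type*} [Nontrivial ι] {φ : FreeGroup ι →* Equiv.Perm (ℕ → Fin 2)}

theorem fixer_cylinder_ne_bot_of_succ (hφ : ∀ g, IsTreeAut (φ g)) {n : ℕ}
    (hn : ∀ w, fixer φ (cylinder w (n + 1)) ≠ ⊥) (w : ℕ → Fin 2) : fixer φ (cylinder w n) ≠ ⊥ := by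
  let child (x : Fin 2) : ℕ → Fin 2 := Function.update w n x
  have hfix (x y : Fin 2) (hxy : y ≠ x) (g) (hg : g ∈ fixer φ (cylinder (child x) (n + 1))) :
      φ g '' cylinder (child y) (n + 1) = cylinder (child y) (n + 1) := by
    refine (hφ g).image_cylinder_eq_of_sibling (u := child x) ?_ ?_
      (mem_fixer.1 hg _ (self_mem_cylinder _ _))
    · rw [mem_cylinder_iff_eq.1 (update_mem_cylinder w n x)]
      exact update_mem_cylinder w n y
    · simpa only [child, Function.update_self] using hxy
  have hunion : cylinder w n = cylinder (child 0) (n + 1) ∪ cylinder (child 1) (n + 1) := by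
    rw [← iUnion_cylinder_update]
    ext u
    simp only [Set.mem_iUnion, Fin.exists_fin_two, Set.mem_union, child]
  rw [hunion]
  exact fixer_union_ne_bot (hn _) (hn _) (hfix 0 1 one_ne_zero) (hfix 1 0 zero_ne_one)
    fun i => (hφ _).exists_pow_image_cylinder_eq _ _

theorem not_injective_of_forall_exists_fixer_ne_bot (hφ : ∀ g, IsTreeAut (φ g))
    (hloc : ∀ w, ∃ U ∈ 𝓝 w, fixer φ U ≠ ⊥) : ¬ Function.Injective φ := by
  have hunif : ∃ n, ∀ w ∈ Set.univ, fixer φ (cylinder w n) ≠ ⊥ := by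
    refine isCompact_univ.induction_on (p := fun s => ∃ n, ∀ w ∈ s, fixer φ (cylinder w n) ≠ ⊥)
      ⟨0, fun _ h => h.elim⟩ (fun s t hst ⟨n, hn⟩ => ⟨n, fun w hw => hn w (hst hw)⟩) ?_ ?_
    · rintro s t ⟨m, hm⟩ ⟨n, hn⟩
      refine ⟨max m n, fun w hw => ?_⟩
      rcases hw with hw | hw
      · exact ne_bot_of_le_ne_bot (hm w hw)
          (fixer_antitone φ (cylinder_anti w (le_max_left m n)))
      · exact ne_bot_of_le_ne_bot (hn w hw)
          (fixer_antitone φ (cylinder_anti w (le_max_right m n)))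
    · intro w _
      obtain ⟨U, hU, hfix⟩ := hloc w
      obtain ⟨n, hn⟩ := exists_cylinder_subset_of_mem_nhds hU
      refine ⟨cylinder w n, mem_nhdsWithin_of_mem_nhds <|
        (isOpen_cylinder _ w n).mem_nhds (self_mem_cylinder w n), n, fun u hu => ?_⟩
      rw [mem_cylinder_iff_eq.1 hu]
      exact ne_bot_of_le_ne_bot hfix (fixer_antitone φ hn)
  obtain ⟨n, hn⟩ := hunif
  have hzero : ∀ w, fixer φ (cylinder w 0) ≠ ⊥ := by
    induction n with
    | zero => exact fun w => hn w trivial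
    | succ n ih => exact ih fun w _ => fixer_cylinder_ne_bot_of_succ hφ (fun w => hn w trivial) w
  intro hinj
  refine hzero 0 ((Subgroup.eq_bot_iff_forall _).2 fun g hg => hinj ?_)
  rw [map_one]
  exact Equiv.ext fun u => mem_fixer.1 hg u (by rw [cylinder_zero]; trivial)

end Cylinders

section Sections

open PiNat

variable {X : Type*}

theorem scons_zero (x : X) (v : ℕ → X) : scons x v 0 = x := rfl

theorem scons_succ (x : X) (v : ℕ → X) (i : ℕ) : scons x v (i + 1) = v i := rfl

theorem exists_eq_scons (u : ℕ → X) : ∃ x v, u = scons x v :=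
  ⟨u 0, fun i => u (i + 1), funext fun i => by cases i <;> rfl⟩

theorem scons_mem_cylinder_succ_iff {x y : X} {u w : ℕ → X} {n : ℕ} :
    scons x u ∈ cylinder (scons y w) (n + 1) ↔ x = y ∧ u ∈ cylinder w n := by
  simp only [mem_cylinder_iff, Nat.forall_lt_succ_left, scons_zero, scons_succ]

theorem wappend_nil (v : Fin 0 → X) (u : ℕ → X) : wappend v u = u :=
  funext fun _ => dif_neg (Nat.not_lt_zero _)

theorem wappend_succ {m : ℕ} (v : Fin (m + 1) → X) (u : ℕ → X) :
    wappend v u = scons (v 0) (wappend (Fin.tail v) u) := by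
  funext i
  cases i with
  | zero => simp [wappend, scons_zero]
  | succ i => simp [wappend, scons_succ, Fin.tail]

/-- The wreath recursion `f = σ(s x)_x`: the permutation `f` acts on the first letter by `σ`, and
`s x` is its section at the letter `x`. -/
def HasWreathRecursion (f : Equiv.Perm (ℕ → X)) (σ : Equiv.Perm X) (s : X → Equiv.Perm (ℕ → X)) :
    Prop :=
  ∀ x v, f (scons x v) = scons (σ x) (s x v)

/-- Every element of `S` has a wreath recursion with sections in `S`; for finite `S` this is a
finite automaton with set of states `S`. -/
def ClosedUnderSections (S : Set (Equiv.Perm (ℕ → X))) : Prop :=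
  ∀ f ∈ S, ∃ σ s, HasWreathRecursion f σ s ∧ ∀ x, s x ∈ S

namespace ClosedUnderSections

variable {S : Set (Equiv.Perm (ℕ → X))} {f : Equiv.Perm (ℕ → X)}

theorem isTreeAut (hS : ClosedUnderSections S) (hf : f ∈ S) : IsTreeAut f := by
  suffices h : ∀ n u w, u ∈ cylinder w n ↔ f u ∈ cylinder (f w) n from fun n w w' => h n w w'
  intro n
  induction n generalizing f with
  | zero => simp only [cylinder_zero, Set.mem_univ, implies_true]
  | succ n ih =>
    intro u w
    obtain ⟨σ, s, hfs, hs⟩ := hS f hf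
    obtain ⟨x, u, rfl⟩ := exists_eq_scons u
    obtain ⟨y, w, rfl⟩ := exists_eq_scons w
    rw [hfs, hfs, scons_mem_cylinder_succ_iff, scons_mem_cylinder_succ_iff, σ.apply_eq_iff_eq]
    refine and_congr_right ?_
    rintro rfl
    exact ih (hs x) u w

theorem exists_restrictFun_eq (hS : ClosedUnderSections S) (hf : f ∈ S) {m : ℕ} (v : Fin m → X) :
    ∃ g ∈ S, restrictFun f v = g := by
  induction m generalizing f with
  | zero =>
    refine ⟨f, hf, funext fun u => funext fun j => ?_⟩
    rw [restrictFun, wappend_nil, zero_add]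
  | succ m ih =>
    obtain ⟨σ, s, hfs, hs⟩ := hS f hf
    obtain ⟨g, hg, hfun⟩ := ih (hs (v 0)) (Fin.tail v)
    refine ⟨g, hg, hfun ▸ funext fun u => funext fun j => ?_⟩
    rw [restrictFun, wappend_succ, hfs, Nat.add_right_comm, scons_succ, restrictFun]

theorem restrictPerm_mem (hS : ClosedUnderSections S) (hf : f ∈ S) {m : ℕ} (v : Fin m → X) :
    restrictPerm f v ∈ S := by
  obtain ⟨g, hg, hfun⟩ := hS.exists_restrictFun_eq hf v
  have hbij : Function.Bijective (restrictFun f v) := hfun ▸ g.bijective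
  have hrestrict : restrictPerm f v = g := by
    rw [restrictPerm, dif_pos hbij]
    exact Equiv.ext (congrFun hfun)
  rwa [hrestrict]

theorem finiteState (hS : ClosedUnderSections S) (hfin : S.Finite) (hf : f ∈ S) :
    FiniteState f := by
  refine hfin.subset ?_
  rintro _ ⟨m, v, rfl⟩
  exact hS.restrictPerm_mem hf v

end ClosedUnderSections

theorem thetaGrowth_one (n : ℕ) : thetaGrowth (1 : Equiv.Perm (ℕ → X)) n = 0 := by
  have hempty : {v : Fin n → X | ¬ RestrictTrivial 1 v} = ∅ :=
    Set.eq_empty_of_forall_notMem fun v hv => hv fun _ _ _ _ => rfl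
  rw [thetaGrowth, hempty, Set.ncard_empty]

theorem thetaGrowth_zero_le (f : Equiv.Perm (ℕ → X)) : thetaGrowth f 0 ≤ 1 :=
  Set.ncard_le_one_of_subsingleton _

namespace HasWreathRecursion

variable {f : Equiv.Perm (ℕ → X)} {σ : Equiv.Perm X} {s : X → Equiv.Perm (ℕ → X)}

theorem restrictTrivial (hf : HasWreathRecursion f σ s) {m : ℕ} {v : Fin (m + 1) → X}
    (hv : RestrictTrivial (s (v 0)) (Fin.tail v)) : RestrictTrivial f v := by
  intro u hu i hi
  obtain ⟨x, u, rfl⟩ := exists_eq_scons u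
  obtain rfl : x = v 0 := hu 0
  obtain ⟨i, rfl⟩ := Nat.exists_eq_add_of_le' (Nat.one_le_of_lt hi)
  rw [hf, scons_succ, scons_succ]
  exact hv u (fun j => hu j.succ) i (Nat.le_of_succ_le_succ hi)

theorem thetaGrowth_succ_le [Fintype X] (hf : HasWreathRecursion f σ s) (n : ℕ) :
    thetaGrowth f (n + 1) ≤ ∑ x, thetaGrowth (s x) n := by
  have hsub : {v : Fin (n + 1) → X | ¬ RestrictTrivial f v} ⊆
      ⋃ x, Fin.cons (α := fun _ => X) x '' {v | ¬ RestrictTrivial (s x) v} := fun v hv =>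
    Set.mem_iUnion.2 ⟨v 0, Fin.tail v, mt hf.restrictTrivial hv, Fin.cons_self_tail v⟩
  calc thetaGrowth f (n + 1)
      ≤ (⋃ x, Fin.cons (α := fun _ => X) x '' {v | ¬ RestrictTrivial (s x) v}).ncard :=
        Set.ncard_le_ncard hsub
    _ ≤ ∑ x, (Fin.cons (α := fun _ => X) x '' {v | ¬ RestrictTrivial (s x) v}).ncard :=
        Set.ncard_iUnion_le_of_fintype _
    _ ≤ ∑ x, thetaGrowth (s x) n := Finset.sum_le_sum fun x _ => Set.ncard_image_le

end HasWreathRecursion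

end Sections

/-- The pair of automorphisms of the binary tree with wreath recursions `a = σ(1, a)` and
`b = (b, a)`, where `σ` is the transposition of the letters. Identifying `{0,1}^ω` with the 2-adic
integers, `a` is the odometer `x ↦ x + 1`. -/
structure IsTullioPair (a b : Equiv.Perm (ℕ → Fin 2)) : Prop where
  a_zero : ∀ v, a (scons 0 v) = scons 1 v
  a_one : ∀ v, a (scons 1 v) = scons 0 (a v)
  b_zero : ∀ v, b (scons 0 v) = scons 0 (b v)
  b_one : ∀ v, b (scons 1 v) = scons 1 (a v)

namespace IsTullioPair

variable {a b : Equiv.Perm (ℕ → Fin 2)}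

theorem hasWreathRecursion_a (h : IsTullioPair a b) :
    HasWreathRecursion a (Equiv.swap 0 1) ![1, a] :=
  Fin.forall_fin_two.2 ⟨h.a_zero, h.a_one⟩

theorem hasWreathRecursion_b (h : IsTullioPair a b) : HasWreathRecursion b 1 ![b, a] :=
  Fin.forall_fin_two.2 ⟨h.b_zero, h.b_one⟩

theorem closedUnderSections (h : IsTullioPair a b) : ClosedUnderSections {1, a, b} := by
  rintro f (rfl | rfl | rfl)
  · exact ⟨1, fun _ => 1, fun _ _ => rfl, by simp⟩
  · exact ⟨_, _, h.hasWreathRecursion_a, by simp [Fin.forall_fin_two]⟩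
  · exact ⟨_, _, h.hasWreathRecursion_b, by simp [Fin.forall_fin_two]⟩

theorem thetaGrowth_a_le (h : IsTullioPair a b) (n : ℕ) : thetaGrowth a n ≤ 1 := by
  induction n with
  | zero => exact thetaGrowth_zero_le a
  | succ n ih =>
    calc thetaGrowth a (n + 1) ≤ thetaGrowth 1 n + thetaGrowth a n := by
          simpa using h.hasWreathRecursion_a.thetaGrowth_succ_le n
      _ ≤ 1 := by rwa [thetaGrowth_one, zero_add]

theorem thetaGrowth_b_le (h : IsTullioPair a b) (n : ℕ) : thetaGrowth b n ≤ n + 1 := by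
  induction n with
  | zero => exact thetaGrowth_zero_le b
  | succ n ih =>
    calc thetaGrowth b (n + 1) ≤ thetaGrowth b n + thetaGrowth a n := by
          simpa using h.hasWreathRecursion_b.thetaGrowth_succ_le n
      _ ≤ n + 1 + 1 := add_le_add ih (h.thetaGrowth_a_le n)

theorem isTreeAut_a (h : IsTullioPair a b) : IsTreeAut a :=
  h.closedUnderSections.isTreeAut (by simp)

theorem isTreeAut_b (h : IsTullioPair a b) : IsTreeAut b :=
  h.closedUnderSections.isTreeAut (by simp)

theorem isTreeAut_of_mem_closure (h : IsTullioPair a b) {g : Equiv.Perm (ℕ → Fin 2)}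
    (hg : g ∈ Subgroup.closure {a, b}) : IsTreeAut g := by
  have hle : Subgroup.closure {a, b} ≤ treeAut (Fin 2) :=
    (Subgroup.closure_le _).2 (Set.pair_subset h.isTreeAut_a h.isTreeAut_b)
  exact hle hg

theorem memP_a (h : IsTullioPair a b) : MemP 0 a :=
  ⟨h.isTreeAut_a, .inr ⟨le_rfl, h.closedUnderSections.finiteState (Set.toFinite _) (by simp), 1,
    by simp, fun n => by simpa using h.thetaGrowth_a_le n⟩⟩

theorem memP_b (h : IsTullioPair a b) : MemP 1 b :=
  ⟨h.isTreeAut_b, .inr ⟨zero_le_one,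
    h.closedUnderSections.finiteState (Set.toFinite _) (by simp), Polynomial.X + 1,
    by exact_mod_cast (Polynomial.natDegree_X_add_C (1 : ℕ)).le,
    fun n => by simpa using h.thetaGrowth_b_le n⟩⟩

end IsTullioPair

section Germs

open PiNat Topology

theorem zpow_scons {X : Type*} {x : X} {f g : Equiv.Perm (ℕ → X)}
    (hfg : ∀ v, f (scons x v) = scons x (g v)) (k : ℤ) (v : ℕ → X) :
    (f ^ k) (scons x v) = scons x ((g ^ k) v) := by
  have hnat (n : ℕ) (v : ℕ → X) : (f ^ n) (scons x v) = scons x ((g ^ n) v) := by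
    have hsemi : Function.Semiconj (scons x) g f := fun v => (hfg v).symm
    rw [← Equiv.Perm.iterate_eq_pow, ← Equiv.Perm.iterate_eq_pow]
    exact ((hsemi.iterate_right n) v).symm
  cases k with
  | ofNat n => exact hnat n v
  | negSucc n =>
    rw [zpow_negSucc, zpow_negSucc, Equiv.Perm.inv_eq_iff_eq, hnat, Equiv.Perm.inv_def,
      Equiv.apply_symm_apply]

namespace IsTullioPair

variable {a b c g : Equiv.Perm (ℕ → Fin 2)} {w : ℕ → Fin 2}

theorem a_zpow_two_mul_scons (h : IsTullioPair a b) (k : ℤ) (x : Fin 2) (v : ℕ → Fin 2) :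
    (a ^ (2 * k)) (scons x v) = scons x ((a ^ k) v) := by
  rw [zpow_mul, zpow_two]
  refine zpow_scons (fun v => ?_) k v
  rw [Equiv.Perm.mul_apply]
  fin_cases x
  · exact (congrArg a (h.a_zero v)).trans (h.a_one v)
  · exact (congrArg a (h.a_one v)).trans (h.a_zero (a v))

theorem a_apply_zero_ne (h : IsTullioPair a b) (u : ℕ → Fin 2) : a u 0 ≠ u 0 := by
  obtain ⟨x, v, rfl⟩ := exists_eq_scons u
  rw [h.hasWreathRecursion_a]
  fin_cases x
  · exact one_ne_zero
  · exact zero_ne_one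

theorem eq_zero_of_a_zpow_apply_eq (h : IsTullioPair a b) {k : ℤ} (hk : (a ^ k) w = w) :
    k = 0 := by
  induction hn : k.natAbs using Nat.strong_induction_on generalizing k w with
  | _ n ih =>
  obtain ⟨x, v, rfl⟩ := exists_eq_scons w
  rcases Int.even_or_odd' k with ⟨j, rfl | rfl⟩
  · by_contra hne
    rw [h.a_zpow_two_mul_scons] at hk
    have hj := ih j.natAbs (by omega) (funext fun i => congrFun hk (i + 1)) rfl
    omega
  · rw [add_comm, zpow_one_add, Equiv.Perm.mul_apply, h.a_zpow_two_mul_scons] at hk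
    exact absurd (congrFun hk 0) (h.a_apply_zero_ne _)

theorem b_apply_zero (h : IsTullioPair a b) : b 0 = 0 := by
  have hscons : scons 0 0 = (0 : ℕ → Fin 2) := funext fun i => by cases i <;> rfl
  have hb : b 0 = scons 0 (b 0) := by rw [← h.b_zero, hscons]
  funext i
  induction i with
  | zero => rw [hb, scons_zero, Pi.zero_apply]
  | succ i ih => rw [hb, scons_succ, ih, Pi.zero_apply, Pi.zero_apply]

theorem b_zpow_apply_eq_a_zpow_apply (h : IsTullioPair a b) (ε : ℤ) {l : ℕ} {u : ℕ → Fin 2}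
    (hzero : ∀ i < l, u i = 0) (hone : u l = 1) : (b ^ ε) u = (a ^ (2 ^ (l + 1) * ε)) u := by
  induction l generalizing u with
  | zero =>
    obtain ⟨x, v, rfl⟩ := exists_eq_scons u
    obtain rfl : x = 1 := hone
    rw [zpow_scons h.b_one, zero_add, pow_one, h.a_zpow_two_mul_scons]
  | succ l ih =>
    obtain ⟨x, v, rfl⟩ := exists_eq_scons u
    obtain rfl : x = 0 := hzero 0 l.succ_pos
    rw [zpow_scons h.b_zero, pow_succ', mul_assoc, h.a_zpow_two_mul_scons,
      ih (u := v) (fun i hi => hzero (i + 1) (Nat.succ_lt_succ hi)) hone]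

theorem exists_b_zpow_eventuallyEq (h : IsTullioPair a b) (hw : w ≠ 0) (ε : ℤ) :
    ∃ k : ℤ, ⇑(b ^ ε) =ᶠ[𝓝 w] ⇑(a ^ k) := by
  have hne : ∃ l, w l ≠ 0 := Function.ne_iff.1 hw
  classical
  let l := Nat.find hne
  have hzero : ∀ i < l, w i = 0 := fun i hi => not_not.1 (Nat.find_min hne hi)
  have hone : w l = 1 := (Fin.exists_fin_two.1 ⟨w l, rfl⟩).resolve_left (Nat.find_spec hne)
  have hcyl : cylinder w (l + 1) ∈ 𝓝 w :=
    (isOpen_cylinder _ w _).mem_nhds (self_mem_cylinder w _)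
  refine ⟨2 ^ (l + 1) * ε, Filter.eventually_of_mem hcyl fun u hu => ?_⟩
  exact h.b_zpow_apply_eq_a_zpow_apply ε (fun i hi => (hu i (hi.trans l.lt_succ_self)).trans
    (hzero i hi)) ((hu l l.lt_succ_self).trans hone)

theorem exists_eventuallyEq_zpow_mul_zpow (h : IsTullioPair a b) (hc : c w = w)
    (hbc : ∀ i : ℤ, (a ^ i) w = 0 → SemiconjBy (a ^ i) c b)
    (hg : g ∈ Subgroup.closure {a, b}) : ∃ i m : ℤ, ⇑g =ᶠ[𝓝 w] ⇑(a ^ i * c ^ m) := by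
  have ha (y : Equiv.Perm (ℕ → Fin 2)) (ε : ℤ)
      (ih : ∃ i m : ℤ, ⇑y =ᶠ[𝓝 w] ⇑(a ^ i * c ^ m)) :
      ∃ i m : ℤ, ⇑(a ^ ε * y) =ᶠ[𝓝 w] ⇑(a ^ i * c ^ m) := by
    obtain ⟨i, m, hy⟩ := ih
    refine ⟨ε + i, m, ?_⟩
    rw [zpow_add, mul_assoc]
    exact hy.fun_comp (a ^ ε)
  have hb (y : Equiv.Perm (ℕ → Fin 2)) (ε : ℤ) (hycl : y ∈ Subgroup.closure {a, b})
      (ih : ∃ i m : ℤ, ⇑y =ᶠ[𝓝 w] ⇑(a ^ i * c ^ m)) :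
      ∃ i m : ℤ, ⇑(b ^ ε * y) =ᶠ[𝓝 w] ⇑(a ^ i * c ^ m) := by
    obtain ⟨i, m, hy⟩ := ih
    by_cases hi : (a ^ i) w = 0
    · refine ⟨i, ε + m, ?_⟩
      rw [zpow_add, ← mul_assoc, ((hbc i hi).zpow_right ε).eq, mul_assoc]
      exact hy.fun_comp (b ^ ε)
    · have hyw : y w = (a ^ i) w := by
        rw [hy.eq_of_nhds, Equiv.Perm.mul_apply,
          Equiv.Perm.zpow_apply_eq_self_of_apply_eq_self hc]
      obtain ⟨k, hk⟩ := h.exists_b_zpow_eventuallyEq (hyw ▸ hi) ε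
      have hk : ⇑(b ^ ε * y) =ᶠ[𝓝 w] ⇑(a ^ k * y) :=
        hk.comp_tendsto (h.isTreeAut_of_mem_closure hycl).continuous.continuousAt
      obtain ⟨j, n, hj⟩ := ha y k ⟨i, m, hy⟩
      exact ⟨j, n, hk.trans hj⟩
  induction hg using Subgroup.closure_induction_left with
  | one => exact ⟨0, 0, .rfl⟩
  | mul_left x hx y hy ih =>
    rw [← zpow_one x]
    rcases hx with rfl | rfl
    · exact ha y 1 ih
    · exact hb y 1 hy ih
  | inv_mul_cancel x hx y hy ih =>
    rw [← zpow_neg_one x]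
    rcases hx with rfl | rfl
    · exact ha y (-1) ih
    · exact hb y (-1) hy ih

theorem exists_forall_eventuallyEq_zpow (h : IsTullioPair a b) (w : ℕ → Fin 2) :
    ∃ c : Equiv.Perm (ℕ → Fin 2),
      ∀ g ∈ Subgroup.closure {a, b}, g w = w → ∃ m : ℤ, ⇑g =ᶠ[𝓝 w] ⇑(c ^ m) := by
  obtain ⟨c, hc, hbc⟩ : ∃ c : Equiv.Perm (ℕ → Fin 2), c w = w ∧
      ∀ i : ℤ, (a ^ i) w = 0 → SemiconjBy (a ^ i) c b := by
    by_cases horbit : ∃ j : ℤ, (a ^ j) w = 0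
    · obtain ⟨j, hj⟩ := horbit
      refine ⟨(a ^ j)⁻¹ * b * a ^ j, ?_, fun i hi => ?_⟩
      · rw [Equiv.Perm.mul_apply, Equiv.Perm.mul_apply, hj, h.b_apply_zero,
          Equiv.Perm.inv_eq_iff_eq, hj]
      · have hij : (a ^ (-j + i)) w = w := by
          rw [zpow_add, Equiv.Perm.mul_apply, hi, zpow_neg, Equiv.Perm.inv_eq_iff_eq, hj]
        obtain rfl : i = j := by linarith [h.eq_zero_of_a_zpow_apply_eq hij]
        rw [SemiconjBy]
        group
    · exact ⟨1, rfl, fun i hi => (horbit ⟨i, hi⟩).elim⟩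
  refine ⟨c, fun g hg hgw => ?_⟩
  obtain ⟨i, m, hgerm⟩ := h.exists_eventuallyEq_zpow_mul_zpow hc hbc hg
  obtain rfl : i = 0 := by
    refine h.eq_zero_of_a_zpow_apply_eq (w := w) ?_
    rw [← Equiv.Perm.zpow_apply_eq_self_of_apply_eq_self hc m, ← Equiv.Perm.mul_apply,
      ← hgerm.eq_of_nhds, hgw, Equiv.Perm.zpow_apply_eq_self_of_apply_eq_self hc]
  exact ⟨m, by simpa only [zpow_zero, one_mul] using hgerm⟩

theorem mul_eventuallyEq_mul_comm (h : IsTullioPair a b) {f g : Equiv.Perm (ℕ → Fin 2)}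
    (hf : f ∈ Subgroup.closure {a, b}) (hg : g ∈ Subgroup.closure {a, b}) (hfw : f w = w)
    (hgw : g w = w) : ⇑(f * g) =ᶠ[𝓝 w] ⇑(g * f) := by
  obtain ⟨c, hgerm⟩ := h.exists_forall_eventuallyEq_zpow w
  obtain ⟨m, hm⟩ := hgerm f hf hfw
  obtain ⟨n, hn⟩ := hgerm g hg hgw
  have hmul {f g : Equiv.Perm (ℕ → Fin 2)} {m n : ℤ} (hg : g ∈ Subgroup.closure {a, b})
      (hgw : g w = w) (hm : ⇑f =ᶠ[𝓝 w] ⇑(c ^ m)) (hn : ⇑g =ᶠ[𝓝 w] ⇑(c ^ n)) :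
      ⇑(f * g) =ᶠ[𝓝 w] ⇑(c ^ m * c ^ n) := by
    have htendsto : Filter.Tendsto g (𝓝 w) (𝓝 w) := by
      simpa only [ContinuousAt, hgw] using
        (h.isTreeAut_of_mem_closure hg).continuous.continuousAt (x := w)
    exact (hm.comp_tendsto htendsto).trans (hn.fun_comp (c ^ m))
  have hfg := hmul hg hgw hm hn
  rw [(Commute.zpow_zpow_self c m n).eq] at hfg
  exact hfg.trans (hmul hf hfw hn hm).symm

end IsTullioPair

end Germs

section SchreierBalls

/-- `Reach a b x p q y`: in the Schreier graph of `⟨a, b⟩`, a path with exactly `p` edges labelled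
by `a` or `a⁻¹` and `q` edges labelled by `b` or `b⁻¹` leads from `x` to `y`. -/
inductive Reach {Y : Type*} (a b : Equiv.Perm Y) (x : Y) : ℕ → ℕ → Y → Prop
  | refl : Reach a b x 0 0 x
  | a_step {p q : ℕ} {y : Y} (ε : ℤˣ) : Reach a b x p q y → Reach a b x (p + 1) q ((a ^ (ε : ℤ)) y)
  | b_step {p q : ℕ} {y : Y} (ε : ℤˣ) : Reach a b x p q y → Reach a b x p (q + 1) ((b ^ (ε : ℤ)) y)

/-- The ball of radius `n` about `x` in the Schreier graph of `⟨a, b⟩`. -/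
def schreierBall {Y : Type*} (a b : Equiv.Perm Y) (x : Y) (n : ℕ) : Set Y :=
  {y | ∃ p q, p + q ≤ n ∧ Reach a b x p q y}

/-- The end points of the paths with at most `P` edges labelled by `a` or `a⁻¹` and at most `N`
edges labelled by `b` or `b⁻¹`. For `N` much larger than `P` these are few among the points of the
ball of radius `P + N`. -/
def sparseBall {Y : Type*} (a b : Equiv.Perm Y) (x : Y) (P N : ℕ) : Set Y :=
  {y | ∃ p ≤ P, ∃ q ≤ N, Reach a b x p q y}

variable {Y : Type*} {a b : Equiv.Perm Y} {x y z : Y} {m n p q P N : ℕ}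

theorem Reach.trans {p' q' : ℕ} (h : Reach a b x p q y) (h' : Reach a b y p' q' z) :
    Reach a b x (p + p') (q + q') z := by
  induction h' with
  | refl => exact h
  | a_step ε _ ih => exact ih.a_step ε
  | b_step ε _ ih => exact ih.b_step ε

theorem Reach.eq_b_zpow_apply_or (h : Reach a b x p q y) : ∃ k ∈ Set.Icc (-q : ℤ) q,
    p = 0 ∧ (b ^ k) x = y ∨
      ∃ p' q' z, ∃ ε : ℤˣ, p = p' + 1 ∧ q' ≤ q ∧ Reach a b x p' q' z ∧
        (b ^ k) ((a ^ (ε : ℤ)) z) = y := by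
  induction h with
  | refl => exact ⟨0, by simp, .inl ⟨rfl, rfl⟩⟩
  | @a_step p q y ε h _ =>
    exact ⟨0, ⟨by omega, by omega⟩, .inr ⟨p, q, y, ε, rfl, le_rfl, h, rfl⟩⟩
  | b_step ε _ ih =>
    obtain ⟨k, ⟨hlo, hhi⟩, hk⟩ := ih
    have hε : -1 ≤ (ε : ℤ) ∧ (ε : ℤ) ≤ 1 := by
      rcases Int.units_eq_one_or ε with rfl | rfl <;> decide
    refine ⟨ε + k, ⟨by push_cast; omega, by push_cast; omega⟩, ?_⟩
    rcases hk with ⟨rfl, rfl⟩ | ⟨p', q', z, δ, rfl, hq', hz, rfl⟩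
    · exact .inl ⟨rfl, by rw [zpow_add, Equiv.Perm.mul_apply]⟩
    · exact .inr ⟨p', q', z, δ, rfl, hq'.trans (Nat.le_succ _), hz, by
        rw [zpow_add, Equiv.Perm.mul_apply]⟩

theorem mem_schreierBall_self : x ∈ schreierBall a b x n := ⟨0, 0, n.zero_le, .refl⟩

theorem schreierBall_zero : schreierBall a b x 0 = {x} := by
  refine Set.Subset.antisymm ?_ (Set.singleton_subset_iff.2 mem_schreierBall_self)
  rintro y ⟨p, q, hpq, hy⟩
  cases hy with
  | refl => rfl
  | _ => omega

theorem schreierBall_mono (a b : Equiv.Perm Y) (x : Y) : Monotone (schreierBall a b x) :=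
  fun _ _ hmn _ ⟨p, q, hpq, hy⟩ => ⟨p, q, hpq.trans hmn, hy⟩

theorem mem_schreierBall_trans (hy : y ∈ schreierBall a b x m) (hz : z ∈ schreierBall a b y n) :
    z ∈ schreierBall a b x (m + n) := by
  obtain ⟨p, q, hpq, hy⟩ := hy
  obtain ⟨p', q', hpq', hz⟩ := hz
  exact ⟨p + p', q + q', by omega, hy.trans hz⟩

theorem a_zpow_apply_mem_schreierBall (hy : y ∈ schreierBall a b x n) (ε : ℤˣ) :
    (a ^ (ε : ℤ)) y ∈ schreierBall a b x (n + 1) :=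
  mem_schreierBall_trans hy ⟨1, 0, le_rfl, Reach.refl.a_step ε⟩

theorem b_zpow_apply_mem_schreierBall (hy : y ∈ schreierBall a b x n) (ε : ℤˣ) :
    (b ^ (ε : ℤ)) y ∈ schreierBall a b x (n + 1) :=
  mem_schreierBall_trans hy ⟨0, 1, le_rfl, Reach.refl.b_step ε⟩

theorem exists_forall_apply_mem_schreierBall {g : Equiv.Perm Y}
    (hg : g ∈ Subgroup.closure {a, b}) : ∃ n, ∀ x, g x ∈ schreierBall a b x n := by
  have step (s y : Equiv.Perm Y) (hs : s ∈ ({a, b} : Set (Equiv.Perm Y))) (ε : ℤˣ)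
      (ih : ∃ n, ∀ x, y x ∈ schreierBall a b x n) :
      ∃ n, ∀ x, (s ^ (ε : ℤ) * y) x ∈ schreierBall a b x n := by
    obtain ⟨n, hn⟩ := ih
    refine ⟨n + 1, fun x => ?_⟩
    rcases hs with rfl | rfl
    · exact a_zpow_apply_mem_schreierBall (hn x) ε
    · exact b_zpow_apply_mem_schreierBall (hn x) ε
  induction hg using Subgroup.closure_induction_left with
  | one => exact ⟨0, fun x => mem_schreierBall_self⟩
  | mul_left s hs y _ ih => simpa using step s y hs 1 ih
  | inv_mul_cancel s hs y _ ih => simpa using step s y hs (-1) ih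

theorem sparseBall_zero_subset (a b : Equiv.Perm Y) (x : Y) (N : ℕ) :
    sparseBall a b x 0 N ⊆ (fun k : ℤ => (b ^ k) x) '' Set.Icc (-N : ℤ) N := by
  rintro y ⟨p, hp, q, hq, hy⟩
  obtain ⟨k, ⟨hlo, hhi⟩, ⟨-, hk⟩ | ⟨p', q', z, ε, hp', -⟩⟩ := hy.eq_b_zpow_apply_or
  · exact ⟨k, ⟨by omega, by omega⟩, hk⟩
  · omega

theorem sparseBall_succ_subset (a b : Equiv.Perm Y) (x : Y) (P N : ℕ) :
    sparseBall a b x (P + 1) N ⊆ (fun t : ℤ × ℤ × Y => (b ^ t.1) ((a ^ t.2.1) t.2.2)) ''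
      (Set.Icc (-N : ℤ) N ×ˢ Set.Icc (-1 : ℤ) 1 ×ˢ sparseBall a b x P N) := by
  rintro y ⟨p, hp, q, hq, hy⟩
  rcases Nat.le_succ_iff.1 hp with hp | rfl
  · exact ⟨(0, 0, y), ⟨⟨by simp, by simp⟩, ⟨by simp, by simp⟩, p, hp, q, hq, hy⟩, rfl⟩
  · obtain ⟨k, ⟨hlo, hhi⟩, ⟨hp', -⟩ | ⟨p', q', z, ε, hp', hq', hz, hk⟩⟩ := hy.eq_b_zpow_apply_or
    · omega
    · have hε : (ε : ℤ) ∈ Set.Icc (-1) 1 := by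
        rcases Int.units_eq_one_or ε with rfl | rfl <;> decide
      exact ⟨(k, ε, z), ⟨⟨by omega, by omega⟩, hε, p', by omega, q', by omega, hz⟩, hk⟩

theorem encard_sparseBall_le (a b : Equiv.Perm Y) (x : Y) (P N : ℕ) :
    (sparseBall a b x P N).encard ≤ (6 * N + 3) ^ (P + 1) := by
  have hIcc (n : ℕ) : (Set.Icc (-n : ℤ) n).encard = 2 * n + 1 := by
    rw [← Finset.coe_Icc, Set.encard_coe_eq_coe_finsetCard, Int.card_Icc]
    norm_cast
    omega
  induction P with
  | zero =>
    calc (sparseBall a b x 0 N).encard ≤ (Set.Icc (-N : ℤ) N).encard :=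
          (Set.encard_le_encard (sparseBall_zero_subset a b x N)).trans (Set.encard_image_le _ _)
      _ ≤ (6 * N + 3) ^ (0 + 1) := by
          rw [hIcc, zero_add, pow_one]
          gcongr <;> norm_num
  | succ P ih =>
    calc (sparseBall a b x (P + 1) N).encard
        ≤ (Set.Icc (-N : ℤ) N ×ˢ Set.Icc (-1 : ℤ) 1 ×ˢ sparseBall a b x P N).encard :=
          (Set.encard_le_encard (sparseBall_succ_subset a b x P N)).trans
            (Set.encard_image_le _ _)
      _ = (2 * N + 1) * (3 * (sparseBall a b x P N).encard) := by
          rw [Set.encard_prod, Set.encard_prod, hIcc,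
            show (Set.Icc (-1 : ℤ) 1).encard = 3 from (hIcc 1).trans (by norm_num)]
      _ ≤ (2 * N + 1) * (3 * (6 * N + 3) ^ (P + 1)) := by gcongr
      _ = (6 * N + 3) ^ (P + 1 + 1) := by ring

end SchreierBalls

namespace IsTullioPair

variable {a b : Equiv.Perm (ℕ → Fin 2)}

theorem a_inv_scons_zero (h : IsTullioPair a b) (v : ℕ → Fin 2) :
    a⁻¹ (scons 0 v) = scons 1 (a⁻¹ v) := by
  rw [Equiv.Perm.inv_eq_iff_eq, h.a_one, Equiv.Perm.inv_def, Equiv.apply_symm_apply]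

theorem a_inv_scons_one (h : IsTullioPair a b) (v : ℕ → Fin 2) :
    a⁻¹ (scons 1 v) = scons 0 v := by
  rw [Equiv.Perm.inv_eq_iff_eq, h.a_zero]

-- A point `1z` is one edge away from both `0z` and `0a(z)`, so both `z` and `a z` are tracked.
theorem exists_mem_schreierBall_of_reach_scons (h : IsTullioPair a b) {x : Fin 2}
    {v u : ℕ → Fin 2} {p q : ℕ} (hu : Reach a b (scons x v) p q u) :
    (∃ z k, u = scons 0 z ∧ 2 * k ≤ p + 2 * q + 1 ∧ z ∈ schreierBall a b v k) ∨
      ∃ z k, u = scons 1 z ∧ 2 * k ≤ p + 2 * q + 2 ∧ z ∈ schreierBall a b v k ∧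
        a z ∈ schreierBall a b v k := by
  have ha {z : ℕ → Fin 2} {k : ℕ} (hz : z ∈ schreierBall a b v k) :
      a z ∈ schreierBall a b v (k + 1) := by
    simpa using a_zpow_apply_mem_schreierBall hz 1
  induction hu with
  | refl =>
    rcases Fin.exists_fin_two.1 ⟨x, rfl⟩ with rfl | rfl
    · exact .inl ⟨v, 0, rfl, by omega, mem_schreierBall_self⟩
    · exact .inr ⟨v, 1, rfl, by omega, mem_schreierBall_self, ha mem_schreierBall_self⟩
  | a_step ε _ ih =>
    rcases Int.units_eq_one_or ε with rfl | rfl <;>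
      simp only [Units.val_one, Units.val_neg, zpow_one, zpow_neg_one] <;>
      rcases ih with ⟨z, k, rfl, hk, hz⟩ | ⟨z, k, rfl, hk, hz, haz⟩
    · exact .inr ⟨z, k + 1, h.a_zero z, by omega, schreierBall_mono a b v k.le_succ hz, ha hz⟩
    · exact .inl ⟨a z, k, h.a_one z, by omega, haz⟩
    · refine .inr ⟨a⁻¹ z, k + 1, h.a_inv_scons_zero z, by omega, ?_, ?_⟩
      · simpa using a_zpow_apply_mem_schreierBall hz (-1)
      · simpa using schreierBall_mono a b v k.le_succ hz
    · exact .inl ⟨z, k, h.a_inv_scons_one z, by omega, hz⟩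
  | b_step ε _ ih =>
    rcases ih with ⟨z, k, rfl, hk, hz⟩ | ⟨z, k, rfl, hk, hz, haz⟩
    · exact .inl ⟨_, k + 1, zpow_scons h.b_zero _ z, by omega, b_zpow_apply_mem_schreierBall hz ε⟩
    · refine .inr ⟨_, k + 1, zpow_scons h.b_one _ z, by omega,
        a_zpow_apply_mem_schreierBall hz ε, ?_⟩
      rw [← Equiv.Perm.mul_apply, (Commute.self_zpow a ε).eq, Equiv.Perm.mul_apply]
      exact a_zpow_apply_mem_schreierBall haz ε

theorem schreierBall_scons_subset (h : IsTullioPair a b) (x : Fin 2) (v : ℕ → Fin 2) (n s : ℕ) :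
    schreierBall a b (scons x v) (n + s) ⊆ sparseBall a b (scons x v) (2 * s + 1) (n + s) ∪
      (scons 0 '' schreierBall a b v n ∪ scons 1 '' schreierBall a b v n) := by
  rintro u ⟨p, q, hpq, hu⟩
  rcases le_or_gt p (2 * s + 1) with hp | hp
  · exact .inl ⟨p, hp, q, by omega, hu⟩
  · rcases h.exists_mem_schreierBall_of_reach_scons hu with
      ⟨z, k, rfl, hk, hz⟩ | ⟨z, k, rfl, hk, hz, -⟩
    · exact .inr (.inl ⟨z, schreierBall_mono a b v (by omega) hz, rfl⟩)
    · exact .inr (.inr ⟨z, schreierBall_mono a b v (by omega) hz, rfl⟩)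

theorem encard_schreierBall_scons_le (h : IsTullioPair a b) (x : Fin 2) (v : ℕ → Fin 2)
    (n s : ℕ) : (schreierBall a b (scons x v) (n + s)).encard ≤
      (6 * (n + s : ℕ) + 3) ^ (2 * s + 2) + 2 * (schreierBall a b v n).encard := by
  refine (Set.encard_le_encard (h.schreierBall_scons_subset x v n s)).trans
    ((Set.encard_union_le _ _).trans (add_le_add (encard_sparseBall_le _ _ _ _ _) ?_))
  rw [two_mul]
  exact (Set.encard_union_le _ _).trans
    (add_le_add (Set.encard_image_le _ _) (Set.encard_image_le _ _))

theorem encard_schreierBall_mul_add_le (h : IsTullioPair a b) {s j N : ℕ} (hj : j * s ≤ N)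
    (w : ℕ → Fin 2) : (schreierBall a b w (j * s)).encard + (6 * N + 3) ^ (2 * s + 2) ≤
      2 ^ j * (1 + (6 * N + 3) ^ (2 * s + 2)) := by
  induction j generalizing w with
  | zero => rw [zero_mul, schreierBall_zero, Set.encard_singleton, pow_zero, one_mul]
  | succ j ih =>
    rw [Nat.succ_mul] at hj ⊢
    obtain ⟨x, v, rfl⟩ := exists_eq_scons w
    set C : ℕ∞ := (6 * N + 3) ^ (2 * s + 2)
    calc (schreierBall a b (scons x v) (j * s + s)).encard + C
        ≤ (6 * (j * s + s : ℕ) + 3) ^ (2 * s + 2) + 2 * (schreierBall a b v (j * s)).encard + C :=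
          by gcongr; exact h.encard_schreierBall_scons_le x v _ s
      _ ≤ C + 2 * (schreierBall a b v (j * s)).encard + C := by simp only [C]; gcongr
      _ = 2 * ((schreierBall a b v (j * s)).encard + C) := by ring
      _ ≤ 2 * (2 ^ j * (1 + C)) := by gcongr; exact ih (by omega) v
      _ = 2 ^ (j + 1) * (1 + C) := by ring

theorem encard_schreierBall_four_pow_le (h : IsTullioPair a b) (m : ℕ) (w : ℕ → Fin 2) :
    (schreierBall a b w (4 ^ m)).encard ≤ (2 ^ ((8 * m + 18) * 2 ^ m) : ℕ) := by
  have hsq : 4 ^ m = 2 ^ m * 2 ^ m := mul_pow 2 2 m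
  have hpos : 1 ≤ 2 ^ m := Nat.one_le_two_pow
  have hbase : 6 * 4 ^ m + 3 ≤ 2 ^ (2 * m + 4) := by
    rw [pow_add, pow_mul]
    have := Nat.one_le_pow m 4 (by norm_num)
    norm_num
    omega
  have hexp : 2 ^ m * 1 + 1 + (2 * m + 4) * (2 * 2 ^ m + 2) ≤ (8 * m + 18) * 2 ^ m := by
    nlinarith
  have hC : 1 ≤ (6 * 4 ^ m + 3) ^ (2 * 2 ^ m + 2) := Nat.one_le_pow _ _ (by omega)
  calc (schreierBall a b w (4 ^ m)).encard
      ≤ (2 ^ 2 ^ m * (1 + (6 * 4 ^ m + 3) ^ (2 * 2 ^ m + 2)) : ℕ) := by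
        rw [hsq]
        exact_mod_cast le_self_add.trans (h.encard_schreierBall_mul_add_le le_rfl w)
    _ ≤ (2 ^ ((8 * m + 18) * 2 ^ m) : ℕ) := Nat.cast_le.2 <| by
        calc 2 ^ 2 ^ m * (1 + (6 * 4 ^ m + 3) ^ (2 * 2 ^ m + 2))
            ≤ 2 ^ 2 ^ m * (2 * (6 * 4 ^ m + 3) ^ (2 * 2 ^ m + 2)) := by gcongr; omega
          _ ≤ 2 ^ 2 ^ m * (2 * (2 ^ (2 * m + 4)) ^ (2 * 2 ^ m + 2)) := by gcongr
          _ = 2 ^ (2 ^ m * 1 + 1 + (2 * m + 4) * (2 * 2 ^ m + 2)) := by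
              rw [← pow_mul, pow_add, pow_succ, mul_one, mul_assoc]
          _ ≤ 2 ^ ((8 * m + 18) * 2 ^ m) := Nat.pow_le_pow_right two_pos hexp

variable {φ : FreeGroup (Fin 2) →* Equiv.Perm (ℕ → Fin 2)}

theorem exists_forall_positiveWord_mem_schreierBall
    (hφ : ∀ z, φ z ∈ Subgroup.closure {a, b}) :
    ∃ c : ℕ, ∀ (l : List (Fin 2)) (w : ℕ → Fin 2),
      φ (positiveWord l) w ∈ schreierBall a b w (c * l.length) := by
  choose r hr using fun i => exists_forall_apply_mem_schreierBall (hφ (FreeGroup.of i))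
  refine ⟨Finset.univ.sup r, fun l w => ?_⟩
  induction l with
  | nil =>
    rw [positiveWord_nil, map_one]
    exact mem_schreierBall_self
  | cons i l ih =>
    rw [positiveWord_cons, map_mul, Equiv.Perm.mul_apply, List.length_cons, Nat.mul_succ]
    exact mem_schreierBall_trans ih
      (schreierBall_mono a b _ (Finset.le_sup (Finset.mem_univ i)) (hr i _))

end IsTullioPair

-- The exponents come from `2 ^ c * n = 4 ^ m` with `m = 2 * c + 8` and `n = 2 ^ (3 * c + 16)`.
theorem mul_two_pow_lt_two_pow (c : ℕ) :
    (4 * 2 ^ (3 * c + 16) + 1) * 2 ^ ((8 * (2 * c + 8) + 18) * 2 ^ (2 * c + 8)) <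
      2 ^ 2 ^ (3 * c + 16) := by
  have hc : c < 2 ^ c := Nat.lt_two_pow_self
  have hm : 1 ≤ 2 ^ (2 * c + 8) := Nat.one_le_two_pow
  have hn : 2 ^ (3 * c + 16) = 256 * 2 ^ c * 2 ^ (2 * c + 8) := by ring
  have hlin : 4 * 2 ^ (3 * c + 16) + 1 ≤ 2 ^ (3 * c + 19) := by
    have hpos : 1 ≤ 2 ^ (3 * c + 16) := Nat.one_le_two_pow
    have hpow : 2 ^ (3 * c + 19) = 2 ^ (3 * c + 16) * 8 := pow_add 2 (3 * c + 16) 3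
    omega
  calc (4 * 2 ^ (3 * c + 16) + 1) * 2 ^ ((8 * (2 * c + 8) + 18) * 2 ^ (2 * c + 8))
      ≤ 2 ^ (3 * c + 19) * 2 ^ ((8 * (2 * c + 8) + 18) * 2 ^ (2 * c + 8)) := by gcongr
    _ = 2 ^ (3 * c + 19 + (8 * (2 * c + 8) + 18) * 2 ^ (2 * c + 8)) := (pow_add _ _ _).symm
    _ < 2 ^ 2 ^ (3 * c + 16) := by
        refine Nat.pow_lt_pow_right one_lt_two ?_
        rw [hn]
        calc 3 * c + 19 + (8 * (2 * c + 8) + 18) * 2 ^ (2 * c + 8)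
            ≤ (19 * c + 101) * 2 ^ (2 * c + 8) := by nlinarith
          _ < 256 * 2 ^ c * 2 ^ (2 * c + 8) := by gcongr; omega

namespace IsTullioPair

open Topology

variable {a b : Equiv.Perm (ℕ → Fin 2)} {φ : FreeGroup (Fin 2) →* Equiv.Perm (ℕ → Fin 2)}

theorem not_isMulCommutative_stabilizer (h : IsTullioPair a b)
    (hφ : ∀ z, φ z ∈ Subgroup.closure {a, b}) (w : ℕ → Fin 2) :
    ¬ IsMulCommutative ((MulAction.stabilizer (Equiv.Perm (ℕ → Fin 2)) w).comap φ) := by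
  intro hcomm
  obtain ⟨c, hc⟩ := exists_forall_positiveWord_mem_schreierBall hφ
  let m := 2 * c + 8
  let n := 2 ^ (3 * c + 16)
  have hball : ∀ l : List (Fin 2), l.length = n →
      φ (positiveWord l) w ∈ schreierBall a b w (4 ^ m) := fun l hl => by
    refine schreierBall_mono a b w ?_ (hc l w)
    calc c * l.length ≤ 2 ^ c * n := by rw [hl]; gcongr; exact Nat.lt_two_pow_self.le
      _ = 2 ^ (c + (3 * c + 16)) := (pow_add _ _ _).symm
      _ = 4 ^ m := by
        rw [show 4 = 2 ^ 2 from rfl, ← pow_mul]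
        congr 1
        omega
  have hcount : ((2 ^ n : ℕ) : ℕ∞) ≤ ((4 * n + 1) * 2 ^ ((8 * m + 18) * 2 ^ m) : ℕ) :=
    calc ((2 ^ n : ℕ) : ℕ∞) ≤ (4 * n + 1 : ℕ) * (schreierBall a b w (4 ^ m)).encard := by
          simpa only [Fintype.card_fin] using card_pow_le_of_forall_positiveWord_mem φ w hball
      _ ≤ (4 * n + 1 : ℕ) * (2 ^ ((8 * m + 18) * 2 ^ m) : ℕ) := by
          gcongr
          exact h.encard_schreierBall_four_pow_le m w
      _ = ((4 * n + 1) * 2 ^ ((8 * m + 18) * 2 ^ m) : ℕ) := (Nat.cast_mul _ _).symm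
  exact (mul_two_pow_lt_two_pow c).not_ge (Nat.cast_le.1 hcount)

theorem exists_fixer_ne_bot (h : IsTullioPair a b) (hφ : ∀ z, φ z ∈ Subgroup.closure {a, b})
    (w : ℕ → Fin 2) : ∃ U ∈ 𝓝 w, fixer φ U ≠ ⊥ := by
  obtain ⟨f, g, hf, hg, hfg⟩ : ∃ f g, φ f w = w ∧ φ g w = w ∧ f * g ≠ g * f := by
    by_contra! hcomm
    exact h.not_isMulCommutative_stabilizer hφ w
      ⟨⟨fun f g => Subtype.ext (hcomm f g f.2 g.2)⟩⟩
  have hgerm : ⇑(φ f * φ g) =ᶠ[𝓝 w] ⇑(φ g * φ f) :=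
    h.mul_eventuallyEq_mul_comm (hφ f) (hφ g) hf hg
  refine ⟨_, hgerm, fun hbot => hfg ?_⟩
  have hmem : (g * f)⁻¹ * (f * g) ∈ fixer φ {u | (φ f * φ g) u = (φ g * φ f) u} :=
    mem_fixer.2 fun u hu => by
      rw [map_mul, map_inv, Equiv.Perm.mul_apply, Equiv.Perm.inv_eq_iff_eq, map_mul, map_mul]
      exact hu
  rw [hbot, Subgroup.mem_bot, inv_mul_eq_one] at hmem
  exact hmem.symm

theorem not_injective (h : IsTullioPair a b) (hφ : ∀ z, φ z ∈ Subgroup.closure {a, b}) :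
    ¬ Function.Injective φ :=
  not_injective_of_forall_exists_fixer_ne_bot (fun z => h.isTreeAut_of_mem_closure (hφ z))
    (h.exists_fixer_ne_bot hφ)

end IsTullioPair

/-- **Example `ex:tullio`.** Let `a` and `b` be the automorphisms of the
binary rooted tree `{0,1}^*` defined recursively by `a(0v) = 1v`, `a(1v) = 0·a(v)`,
`b(0v) = 0·b(v)`, `b(1v) = 1·a(v)`. Then `a ∈ P_0({0,1})`, `b ∈ P_1({0,1})`, and the
group `G = ⟨a, b⟩` contains no free non-abelian subgroup. -/
theorem stmt_15 (a b : Equiv.Perm (ℕ → Fin 2))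
    (ha0 : ∀ v : ℕ → Fin 2, a (scons 0 v) = scons 1 v)
    (ha1 : ∀ v : ℕ → Fin 2, a (scons 1 v) = scons 0 (a v))
    (hb0 : ∀ v : ℕ → Fin 2, b (scons 0 v) = scons 0 (b v))
    (hb1 : ∀ v : ℕ → Fin 2, b (scons 1 v) = scons 1 (a v)) :
    MemP 0 a ∧ MemP 1 b ∧
      ∀ φ : FreeGroup (Fin 2) →* Equiv.Perm (ℕ → Fin 2),
        (∀ z, φ z ∈ Subgroup.closure {a, b}) → ¬ Function.Injective φ := by
  have h : IsTullioPair a b := ⟨ha0, ha1, hb0, hb1⟩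
  exact ⟨h.memP_a, h.memP_b, fun _ hφ => h.not_injective hφ⟩
end
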